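/- Every 5-connected nonplanar apex graph contains a subdivision of K₅ or contains K₄ minus an edge as a subgraph. -/

import Mathlib

open SimpleGraph

variable {V : Type*}

/-- `K₄⁻` (two triangles sharing the edge `ab`; the edge `cd` may be absent)
occurs as a subgraph of `G`. -/
def containsK4minus (G : SimpleGraph V) : Prop :=
  ∃ a b c d : V, a ≠ b ∧ a ≠ c ∧ a ≠ d ∧ b ≠ c ∧ b ≠ d ∧ c ≠ d ∧
    G.Adj a b ∧ G.Adj a c ∧ G.Adj a d ∧ G.Adj b c ∧ G.Adj b d

/-- `G` contains a subdivision of `K₅`: five branch vertices joined by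
pairwise internally disjoint paths. -/
def containsK5Subdivision (G : SimpleGraph V) : Prop :=
  ∃ (b : Fin 5 → V) (P : ∀ i j : Fin 5, G.Walk (b i) (b j)),
    Function.Injective b ∧
    (∀ i j, i ≠ j → (P i j).IsPath) ∧
    (∀ i j, i ≠ j → ∀ k, b k ∈ (P i j).support → k = i ∨ k = j) ∧
    (∀ i j i' j', i < j → i' < j' → (i, j) ≠ (i', j') →
      ∀ x, x ∈ (P i j).support → x ∈ (P i' j').support → x = b i ∨ x = b j)

/-- `G` has an `H`-minor (branch sets are connected, disjoint, joined by edges). -/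
def HasMinor {W : Type*} (G : SimpleGraph V) (H : SimpleGraph W) : Prop :=
  ∃ f : W → Set V,
    (∀ w, (G.induce (f w)).Connected) ∧
    (∀ w₁ w₂, w₁ ≠ w₂ → Disjoint (f w₁) (f w₂)) ∧
    (∀ w₁ w₂, H.Adj w₁ w₂ → ∃ x ∈ f w₁, ∃ y ∈ f w₂, G.Adj x y)

/-- Planarity, via Wagner's theorem: no `K₅` and no `K₃,₃` minor. -/
def IsPlanar (G : SimpleGraph V) : Prop :=
  ¬ HasMinor G (completeGraph (Fin 5)) ∧
  ¬ HasMinor G (completeBipartiteGraph (Fin 3) (Fin 3))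

/-- `G` is `k`-connected: more than `k` vertices, and removing fewer than `k`
vertices leaves a connected graph. -/
def IsKConnected (k : ℕ) (G : SimpleGraph V) : Prop :=
  k < (Set.univ : Set V).ncard ∧
  ∀ S : Set V, S.Finite → S.ncard < k → (G.induce Sᶜ).Connected

/-- Boundary of a subgraph `H` of `G`: vertices of `H` incident with an edge
of `G` not in `H`. -/
def bnd (G : SimpleGraph V) (H : G.Subgraph) : Set V :=
  {v | v ∈ H.verts ∧ ∃ w, G.Adj v w ∧ ¬ H.Adj v w}

/-- A `k`-hammock: connected subgraph with boundary of size `k`. -/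
def IsHammock (G : SimpleGraph V) (k : ℕ) (H : G.Subgraph) : Prop :=
  H.Connected ∧ (bnd G H).ncard = k

def TrivialHammock (G : SimpleGraph V) (H : G.Subgraph) : Prop :=
  H.verts = bnd G H

def DegenerateHammock (G : SimpleGraph V) (H : G.Subgraph) : Prop :=
  H.verts.ncard = (bnd G H).ncard + 1

def FatHammock (G : SimpleGraph V) (H : G.Subgraph) : Prop :=
  (bnd G H).ncard + 2 ≤ H.verts.ncard

/-- A `4`-hammock is minimal if all its proper `4`-hammocks are trivial or degenerate. -/
def Minimal4Hammock (G : SimpleGraph V) (H : G.Subgraph) : Prop :=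
  IsHammock G 4 H ∧
  ∀ H' : G.Subgraph, H' ≤ H → H' ≠ H → IsHammock G 4 H' →
    TrivialHammock G H' ∨ DegenerateHammock G H'

def MinimalFat4Hammock (G : SimpleGraph V) (H : G.Subgraph) : Prop :=
  Minimal4Hammock G H ∧ FatHammock G H

/-- The list `l` records a cycle of `G` (vertices in clockwise order). -/
def IsCycleList (G : SimpleGraph V) (l : List V) : Prop :=
  l.Nodup ∧ 3 ≤ l.length ∧
    ∀ i : Fin l.length,
      G.Adj (l.get i) (l.get ⟨((i : ℕ) + 1) % l.length, Nat.mod_lt _ i.pos⟩)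

/-- `x` and `y` are consecutive on the cyclic list `C`. -/
def CycAdj (C : List V) (x y : V) : Prop :=
  ∃ i : Fin C.length,
    (C.get i = x ∧ C.get ⟨((i : ℕ) + 1) % C.length, Nat.mod_lt _ i.pos⟩ = y) ∨
    (C.get i = y ∧ C.get ⟨((i : ℕ) + 1) % C.length, Nat.mod_lt _ i.pos⟩ = x)

/-- Clockwise (forward) distance between positions on a cycle of length `n`. -/
def cycDist (n i j : ℕ) : ℕ := (j + n - i) % n

/-- The open segment of the cycle `C` from `a` clockwise to `b`. -/
def segOpen (C : List V) (a b : V) : Set V :=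
  {x | ∃ i j k : Fin C.length, C.get i = a ∧ C.get j = b ∧ C.get k = x ∧
    k ≠ i ∧ k ≠ j ∧ cycDist C.length (i : ℕ) (k : ℕ) < cycDist C.length (i : ℕ) (j : ℕ)}

/-- The closed segment of the cycle `C` from `a` clockwise to `b`. -/
def segClosed (C : List V) (a b : V) : Set V := segOpen C a b ∪ {a, b}

/-- `a 0, a 1, a 2, a 3` appear in this clockwise order along the cycle `C`. -/
def ClockwiseOn (C : List V) (a : Fin 4 → V) : Prop :=
  ∃ p : Fin 4 → Fin C.length, (∀ j, C.get (p j) = a j) ∧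
    ∀ j k : Fin 4, j < k →
      cycDist C.length ((p 0 : Fin C.length) : ℕ) ((p j : Fin C.length) : ℕ) <
        cycDist C.length ((p 0 : Fin C.length) : ℕ) ((p k : Fin C.length) : ℕ)

/-- `x` and `y` are consecutive among the points of `S` on the cycle `C`:
one of the two open arcs between them misses `S`. -/
def ConsecutiveOn (C : List V) (S : Set V) (x y : V) : Prop :=
  segOpen C x y ∩ S = ∅ ∨ segOpen C y x ∩ S = ∅

/-- A combinatorial plane graph: a graph together with its facial cycles and a
distinguished outer face; every edge lies on exactly two faces and every vertex
on exactly `deg` faces (valid for `2`-connected plane graphs). -/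
structure PlaneGraph (V : Type*) where
  graph : SimpleGraph V
  faces : Finset (List V)
  outer : List V
  outer_mem : outer ∈ faces
  faces_cycle : ∀ f ∈ faces, IsCycleList graph f
  edge_two_faces : ∀ x y, graph.Adj x y →
    {f ∈ (faces : Set (List V)) | CycAdj f x y}.ncard = 2
  vertex_faces : ∀ v : V,
    {f ∈ (faces : Set (List V)) | v ∈ f}.ncard = (graph.neighborSet v).ncard

def Cofacial (P : PlaneGraph V) (u w : V) : Prop :=
  ∃ f ∈ P.faces, u ∈ f ∧ w ∈ f

/-- `C` is the rim of the facial wheel `S_u`: the induced cycle on the vertices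
cofacial with `u`, containing `N(u)` and separating `u` from the rest of the graph. -/
def IsFacialRim (P : PlaneGraph V) (u : V) (C : List V) : Prop :=
  IsCycleList P.graph C ∧ u ∉ C ∧
  (∀ w, w ∈ C ↔ (w ≠ u ∧ Cofacial P u w)) ∧
  P.graph.neighborSet u ⊆ {x | x ∈ C} ∧
  (∀ x ∈ C, ∀ y ∈ C, P.graph.Adj x y → CycAdj C x y) ∧
  (∀ w, w ∉ C → w ≠ u → ∀ p : P.graph.Walk u w, ∃ x ∈ p.support, x ∈ C)

/-- The facial wheel `S_u` (hub `u`, spokes, and rim `C`) is a subgraph of `H`. -/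
def WheelIn (G : SimpleGraph V) (H : G.Subgraph) (u : V) (C : List V) : Prop :=
  u ∈ H.verts ∧ (∀ x ∈ C, x ∈ H.verts) ∧
  (∀ x, G.Adj u x → H.Adj u x) ∧
  (∀ x y, CycAdj C x y → H.Adj x y)

/-- A system of `k` pairwise vertex-disjoint `(A,B)`-paths inside the subgraph `H`,
internally disjoint from `A ∪ B`. -/
structure Linkage (G : SimpleGraph V) (H : G.Subgraph) (A B : Set V) (k : ℕ) where
  s : Fin k → V
  t : Fin k → V
  walk : ∀ i, G.Walk (s i) (t i)
  isPath : ∀ i, (walk i).IsPath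
  support_mem : ∀ i, ∀ x ∈ (walk i).support, x ∈ H.verts
  edges_mem : ∀ i, ∀ e ∈ (walk i).edges, e ∈ H.edgeSet
  s_mem : ∀ i, s i ∈ A
  t_mem : ∀ i, t i ∈ B
  internal : ∀ i, ∀ x ∈ (walk i).support, x ≠ s i → x ≠ t i → x ∉ A ∧ x ∉ B
  disj : ∀ i j, i ≠ j → ∀ x ∈ (walk i).support, x ∉ (walk j).support

/-- A `C_u`-linkage: a `(bnd H, C)`-4-linkage in `H`. -/
abbrev CuLinkage (G : SimpleGraph V) (H : G.Subgraph) (C : List V) :=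
  Linkage G H (bnd G H) {x | x ∈ C} 4

/-- `α(L)`: the number of endpoints of the linkage lying in `N(u)`. -/
noncomputable def lAlpha (G : SimpleGraph V) (u : V) {H : G.Subgraph} {A B : Set V} {k : ℕ}
    (L : Linkage G H A B k) : ℕ :=
  {i : Fin k | L.t i ∈ G.neighborSet u}.ncard

/-- Data of a short wheel: the four neighbours of `u` in clockwise rim order,
two edge-disjoint triangles at `u`, and the two remaining rim segments of
order between 2 and 4, not both of order 4. -/
def ShortWheelOn (G : SimpleGraph V) (u : V) (C : List V) (n : Fin 4 → V) : Prop :=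
  ClockwiseOn C n ∧ Set.range n = G.neighborSet u ∧
  G.Adj (n 0) (n 1) ∧ G.Adj (n 2) (n 3) ∧
  (segOpen C (n 1) (n 2)).ncard ≤ 2 ∧ (segOpen C (n 3) (n 0)).ncard ≤ 2 ∧
  ¬((segOpen C (n 1) (n 2)).ncard = 2 ∧ (segOpen C (n 3) (n 0)).ncard = 2)

def IsShortWheel (G : SimpleGraph V) (u : V) (C : List V) : Prop :=
  (G.neighborSet u).ncard = 4 ∧ ∃ n, ShortWheelOn G u C n

/-- A short wheel which, if imbalanced (a segment of order 4), is proper with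
respect to the boundary set `B`: the interior of that segment avoids `B`. -/
def IsShortProperWheel (G : SimpleGraph V) (u : V) (C : List V) (B : Set V) : Prop :=
  (G.neighborSet u).ncard = 4 ∧ ∃ n, ShortWheelOn G u C n ∧
    ((segOpen C (n 1) (n 2)).ncard = 2 → segOpen C (n 1) (n 2) ∩ B = ∅) ∧
    ((segOpen C (n 3) (n 0)).ncard = 2 → segOpen C (n 3) (n 0) ∩ B = ∅)

/-! Suppose `G` has no `K₄⁻`. Then `H = G - v` is a 4-connected planar graph whose triangles are
pairwise edge-disjoint. Faces of `H` are replaced by its peripheral (induced nonseparating) cycles,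
and both halves of Euler's formula that matter come without an embedding. By Tutte's theorem the
peripheral cycles span the cycle space, so there are more than `|E| - |V|` of them; this is shown
dually: a set of edges meeting every peripheral cycle evenly is a cut. On the other hand, three
peripheral cycles through a common edge would yield a `K₅` or `K₃,₃` minor. With `F` peripheral
cycles and `T` triangles this gives `4F ≤ 2|E| + T`. If every triangle had at most one vertex of
degree 4, then `T + 4|V| ≤ 2|E|`, since each vertex of degree at least 5 lies on at most half its
degree many triangles; the three inequalities are incompatible. So some triangle of `H` has two
vertices of degree 4 in `H`. Both are adjacent to `v` because `G` is 5-connected, and the triangle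
together with `v` contains a `K₄⁻`. -/

section ConnectedSets

variable {G : SimpleGraph V} {P Q S S' T T' U X Z : Set V} {x : V}

/-- The sets `S` and `T` are joined by an edge of `G`. -/
def Touches (G : SimpleGraph V) (S T : Set V) : Prop := ∃ x ∈ S, ∃ y ∈ T, G.Adj x y

lemma Touches.symm (h : Touches G S T) : Touches G T S := by
  obtain ⟨x, hx, y, hy, hxy⟩ := h
  exact ⟨y, hy, x, hx, hxy.symm⟩

lemma Touches.mono (h : Touches G S T) (hS : S ⊆ S') (hT : T ⊆ T') : Touches G S' T' := by
  obtain ⟨x, hx, y, hy, hxy⟩ := h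
  exact ⟨x, hS hx, y, hT hy, hxy⟩

/-- The vertices of `U` outside `X` that have a neighbour in `X`. A set `X ⊆ U` with
`nbhdIn G U X = ∅` is a union of components of `G.induce U`. -/
def nbhdIn (G : SimpleGraph V) (U X : Set V) : Set V := {y ∈ U \ X | ∃ x ∈ X, G.Adj x y}

lemma mem_nbhdIn_iff : x ∈ nbhdIn G U X ↔ x ∈ U \ X ∧ Touches G {x} X := by
  constructor
  · exact fun ⟨hx, u, hu, hux⟩ ↦ ⟨hx, x, rfl, u, hu, hux.symm⟩
  · rintro ⟨hx, _, rfl, u, hu, hxu⟩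
    exact ⟨hx, u, hu, hxu.symm⟩

lemma nbhdIn_eq_empty_iff :
    nbhdIn G U X = ∅ ↔ ∀ x ∈ X, ∀ y ∈ U, G.Adj x y → y ∈ X := by
  rw [Set.eq_empty_iff_forall_notMem]
  exact ⟨fun h x hx y hy hxy ↦ by_contra fun hyX ↦ h y ⟨⟨hy, hyX⟩, x, hx, hxy⟩,
    fun h y ⟨⟨hyU, hyX⟩, x, hx, hxy⟩ ↦ hyX (h x hx y hyU hxy)⟩

lemma nbhdIn_singleton : nbhdIn G U {x} = G.neighborSet x ∩ U := by
  ext y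
  exact ⟨fun ⟨⟨hy, _⟩, _, hu, huy⟩ ↦ ⟨hu ▸ huy, hy⟩,
    fun ⟨hxy, hy⟩ ↦ ⟨⟨hy, hxy.ne'⟩, x, rfl, hxy⟩⟩

lemma mem_of_reachable_of_nbhdIn_eq_empty {u v : S} (h : (G.induce S).Reachable u v)
    (hZ : nbhdIn G S Z = ∅) (hu : (u : V) ∈ Z) : (v : V) ∈ Z := by
  obtain ⟨w⟩ := h
  induction w with
  | nil => exact hu
  | cons hadj _ ih => exact ih (nbhdIn_eq_empty_iff.1 hZ _ hu _ (Subtype.coe_prop _) hadj)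

lemma exists_nbhdIn_eq_empty_forall_reachable (hx : x ∈ S) :
    ∃ K ⊆ S, x ∈ K ∧ nbhdIn G S K = ∅ ∧
      ∀ y ∈ K, ∃ hy : y ∈ S, (G.induce S).Reachable ⟨x, hx⟩ ⟨y, hy⟩ := by
  refine ⟨{y | ∃ hy : y ∈ S, (G.induce S).Reachable ⟨x, hx⟩ ⟨y, hy⟩}, fun y ⟨hy, _⟩ ↦ hy,
    ⟨hx, Reachable.refl _⟩, ?_, fun y hy ↦ hy⟩
  exact nbhdIn_eq_empty_iff.2 fun u ⟨hu, hxu⟩ v hv huv ↦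
    ⟨hv, hxu.trans (Adj.reachable (G := G.induce S) (u := ⟨u, hu⟩) (v := ⟨v, hv⟩) huv)⟩

lemma connected_induce_iff_nbhdIn :
    (G.induce S).Connected ↔
      S.Nonempty ∧ ∀ Z ⊆ S, Z.Nonempty → nbhdIn G S Z = ∅ → Z = S := by
  constructor
  · intro hS
    refine ⟨Set.nonempty_coe_sort.1 hS.nonempty, fun Z hZS ⟨z, hz⟩ hZ ↦ hZS.antisymm fun y hy ↦ ?_⟩
    exact mem_of_reachable_of_nbhdIn_eq_empty (hS.preconnected ⟨z, hZS hz⟩ ⟨y, hy⟩) hZ hz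
  · rintro ⟨⟨x, hx⟩, hS⟩
    obtain ⟨K, hKS, hxK, hK, hreach⟩ := exists_nbhdIn_eq_empty_forall_reachable (G := G) hx
    obtain rfl : K = S := hS K hKS ⟨x, hxK⟩ hK
    exact (connected_iff_exists_forall_reachable _).2
      ⟨⟨x, hx⟩, fun ⟨y, hy⟩ ↦ (hreach y hy).2⟩

lemma eq_of_nbhdIn_eq_empty (hS : (G.induce S).Connected) (hZS : Z ⊆ S) (hZ : Z.Nonempty)
    (h : nbhdIn G S Z = ∅) : Z = S :=
  (connected_induce_iff_nbhdIn.1 hS).2 Z hZS hZ h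

lemma touches_sdiff (hS : (G.induce S).Connected) (hZS : Z ⊂ S) (hZ : Z.Nonempty) :
    Touches G Z (S \ Z) := by
  by_contra h
  refine hZS.ne (eq_of_nbhdIn_eq_empty hS hZS.subset hZ (nbhdIn_eq_empty_iff.2 ?_))
  intro u hu v hv huv
  by_contra hvZ
  exact h ⟨u, hu, v, ⟨hv, hvZ⟩, huv⟩

lemma nonempty_of_connected (hS : (G.induce S).Connected) : S.Nonempty :=
  (connected_induce_iff_nbhdIn.1 hS).1

lemma exists_component (hx : x ∈ S) :
    ∃ K ⊆ S, x ∈ K ∧ (G.induce K).Connected ∧ nbhdIn G S K = ∅ := by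
  obtain ⟨K, hKS, hxK, hK, hreach⟩ := exists_nbhdIn_eq_empty_forall_reachable (G := G) hx
  refine ⟨K, hKS, hxK, connected_induce_iff_nbhdIn.2 ⟨⟨x, hxK⟩, ?_⟩, hK⟩
  rintro Z hZK ⟨z, hz⟩ hZ
  have hZ' : nbhdIn G S Z = ∅ := nbhdIn_eq_empty_iff.2 fun u hu v hv huv ↦
    nbhdIn_eq_empty_iff.1 hZ u hu v (nbhdIn_eq_empty_iff.1 hK u (hZK hu) v hv huv) huv
  obtain ⟨_, hxz⟩ := hreach z (hZK hz)
  refine hZK.antisymm fun y hy ↦ ?_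
  obtain ⟨_, hxy⟩ := hreach y hy
  exact mem_of_reachable_of_nbhdIn_eq_empty (hxz.symm.trans hxy) hZ' hz

lemma connected_singleton (x : V) : (G.induce {x}).Connected := by
  refine connected_induce_iff_nbhdIn.2 ⟨⟨x, rfl⟩, fun Z hZ hne _ ↦ ?_⟩
  exact (Set.subset_singleton_iff_eq.1 hZ).resolve_left hne.ne_empty

lemma connected_union (hS : (G.induce S).Connected) (hT : (G.induce T).Connected)
    (h : Touches G S T) : (G.induce (S ∪ T)).Connected := by
  obtain ⟨x, hx, y, hy, hxy⟩ := h
  exact connected_induce_union hS.preconnected hT.preconnected hx hy hxy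

lemma connected_insert (hS : (G.induce S).Connected) (h : ∃ y ∈ S, G.Adj x y) :
    (G.induce (insert x S)).Connected := by
  obtain ⟨y, hy, hxy⟩ := h
  exact connected_union (connected_singleton x) hS ⟨x, rfl, y, hy, hxy⟩

lemma touches_or_exists_link (hS : (G.induce S).Connected) (hPS : P ⊆ S) (hQS : Q ⊆ S)
    (hPQ : Disjoint P Q) (hP : P.Nonempty) (hQ : Q.Nonempty) :
    Touches G P Q ∨
      ∃ K ⊆ S \ (P ∪ Q), (G.induce K).Connected ∧ Touches G P K ∧ Touches G K Q := by
  by_contra! h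
  obtain ⟨hPQ', hK⟩ := h
  let Z : Set V := P ∪ ⋃₀ {K | K ⊆ S \ (P ∪ Q) ∧ (G.induce K).Connected ∧ Touches G P K}
  have hZS : Z ⊆ S :=
    Set.union_subset hPS (Set.sUnion_subset fun K hK ↦ hK.1.trans Set.sdiff_subset)
  have hclosed : nbhdIn G S Z = ∅ := by
    refine nbhdIn_eq_empty_iff.2 fun u hu v hv huv ↦ ?_
    by_cases hvP : v ∈ P
    · exact Or.inl hvP
    rcases hu with hu | ⟨K, ⟨hKS, hKc, hPK⟩, hu⟩
    · have hvQ : v ∉ Q := fun hvQ ↦ hPQ' ⟨u, hu, v, hvQ, huv⟩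
      exact Or.inr ⟨{v}, ⟨by grind, connected_singleton v, u, hu, v, rfl, huv⟩, rfl⟩
    · have hvQ : v ∉ Q := fun hvQ ↦ hK K hKS hKc hPK ⟨u, hu, v, hvQ, huv⟩
      refine Or.inr ⟨insert v K, ⟨by grind, connected_insert hKc ⟨u, hu, huv.symm⟩,
        hPK.mono subset_rfl (Set.subset_insert v K)⟩, Set.mem_insert v K⟩
  have hZ : Z = S := eq_of_nbhdIn_eq_empty hS hZS (hP.mono Set.subset_union_left) hclosed
  obtain ⟨q, hq⟩ := hQ
  rcases hZ.ge (hQS hq) with hqP | ⟨K, ⟨hKS, -⟩, hqK⟩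
  · exact hPQ.notMem_of_mem_left hqP hq
  · exact (hKS hqK).2 (Or.inr hq)

lemma exists_superset_touches (hS : (G.induce S).Connected) (hPS : P ⊆ S) (hQS : Q ⊆ S)
    (hPQ : Disjoint P Q) (hP : (G.induce P).Connected) (hQ : Q.Nonempty) :
    ∃ P', P ⊆ P' ∧ P' ⊆ S \ Q ∧ (G.induce P').Connected ∧ Touches G P' Q := by
  have hPSQ : P ⊆ S \ Q := Set.subset_sdiff.2 ⟨hPS, hPQ⟩
  rcases touches_or_exists_link hS hPS hQS hPQ (nonempty_of_connected hP) hQ with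
    h | ⟨K, hKS, hK, hPK, hKQ⟩
  · exact ⟨P, subset_rfl, hPSQ, hP, h⟩
  · exact ⟨P ∪ K, Set.subset_union_left, Set.union_subset hPSQ (by grind),
      connected_union hP hK hPK, hKQ.mono Set.subset_union_right subset_rfl⟩

lemma exists_link_compl (hS : (G.induce Sᶜ).Connected) (hPQ : ¬ Touches G P Q)
    (hdisj : Disjoint P Q) (hPS : ¬ P ⊆ S) (hxQ : x ∈ Q) (hxS : ∃ y ∉ S, G.Adj x y) :
    ∃ K ⊆ (S ∪ P ∪ Q)ᶜ, (G.induce K).Connected ∧ Touches G P K ∧ Touches G Q K := by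
  obtain ⟨p, hp, hpS⟩ := Set.not_subset.1 hPS
  have hsub : insert x (Q \ S) ⊆ Q := Set.insert_subset hxQ Set.sdiff_subset
  rcases touches_or_exists_link (connected_insert hS hxS) (P := P \ S) (Q := insert x (Q \ S))
    (by grind) (by grind) (hdisj.mono Set.sdiff_subset hsub) ⟨p, hp, hpS⟩ (Set.insert_nonempty _ _)
    with h | ⟨K, hKS, hK, hPK, hKQ⟩
  · exact (hPQ (h.mono Set.sdiff_subset hsub)).elim
  · exact ⟨K, by grind, hK, hPK.mono Set.sdiff_subset subset_rfl,
      hKQ.symm.mono hsub subset_rfl⟩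

end ConnectedSets

section InducedCycles

variable {G : SimpleGraph V} {C K L : Set V} {x : V}

lemma degree_induce_eq_ncard (K : Set V) (x : K) [Fintype ((G.induce K).neighborSet x)] :
    (G.induce K).degree x = (G.neighborSet x ∩ K).ncard := by
  rw [← card_neighborSet_eq_degree, ← Nat.card_eq_fintype_card, Nat.card_coe_set_eq,
    ← Set.ncard_image_of_injective _ Subtype.val_injective]
  congr 1
  ext y
  simp [and_comm]

lemma sum_ncard_neighborSet_inter_self (K : Set V) [Fintype K] :
    ∑ x : K, (G.neighborSet x ∩ K).ncard = 2 * (G.induce K).edgeSet.ncard := by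
  classical
  rw [← Nat.card_coe_set_eq, Nat.card_eq_fintype_card, ← edgeFinset_card,
    ← sum_degrees_eq_twice_card_edges]
  exact Finset.sum_congr rfl fun x _ ↦ (degree_induce_eq_ncard K x).symm

/-- The edges of `G` from `K` to `L`, as ordered pairs. -/
def edgesBetween (G : SimpleGraph V) (K L : Set V) : Set (V × V) :=
  {p | p.1 ∈ K ∧ p.2 ∈ L ∧ G.Adj p.1 p.2}

lemma ncard_edgesBetween_comm : (edgesBetween G K L).ncard = (edgesBetween G L K).ncard := by
  rw [← Set.ncard_image_of_injective _ Prod.swap_injective]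
  congr 1
  ext ⟨x, y⟩
  simp only [edgesBetween, Set.image_swap_eq_preimage_swap]
  exact ⟨fun ⟨h, h', hxy⟩ ↦ ⟨h', h, hxy.symm⟩, fun ⟨h, h', hxy⟩ ↦ ⟨h', h, hxy.symm⟩⟩

lemma ncard_edgesBetween [Finite V] (K L : Set V) [Fintype K] :
    (edgesBetween G K L).ncard = ∑ x : K, (G.neighborSet x ∩ L).ncard := by
  have e : edgesBetween G K L ≃ Σ x : K, (G.neighborSet x ∩ L : Set V) :=
    { toFun p := ⟨⟨p.1.1, p.2.1⟩, p.1.2, p.2.2.2, p.2.2.1⟩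
      invFun q := ⟨(q.1, q.2), q.1.2, q.2.2.2, q.2.2.1⟩
      left_inv _ := rfl
      right_inv _ := rfl }
  rw [← Nat.card_coe_set_eq, Nat.card_congr e, Nat.card_sigma]
  exact Finset.sum_congr rfl fun x _ ↦ Nat.card_coe_set_eq _

/-- `C` is the vertex set of an induced cycle of `G` (for a finite set `C`; the definition does
not exclude two-way infinite paths). -/
def IsInducedCycle (G : SimpleGraph V) (C : Set V) : Prop :=
  (G.induce C).Connected ∧ ∀ x ∈ C, (G.neighborSet x ∩ C).ncard = 2

namespace IsInducedCycle

lemma eq_or_eq_of_adj (hC : IsInducedCycle G C) {p q r : V} (hx : x ∈ C)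
    (hp : p ∈ C) (hq : q ∈ C) (hr : r ∈ C) (hpq : p ≠ q)
    (hxp : G.Adj x p) (hxq : G.Adj x q) (hxr : G.Adj x r) : r = p ∨ r = q := by
  obtain ⟨s, t, -, hN⟩ := Set.ncard_eq_two.1 (hC.2 x hx)
  have h : ∀ {v}, v ∈ C → G.Adj x v → v = s ∨ v = t := fun hv hxv ↦ by
    simpa using hN.le ⟨hxv, hv⟩
  grind

lemma exists_adj_ne (hC : IsInducedCycle G C) (hx : x ∈ C) (y : V) :
    ∃ z ∈ C, G.Adj x z ∧ z ≠ y := by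
  obtain ⟨z, ⟨hxz, hz⟩, hzy⟩ := Set.exists_ne_of_one_lt_ncard (by rw [hC.2 x hx]; omega) y
  exact ⟨z, hz, hxz, hzy⟩

variable [Finite V]

lemma ncard_edgeSet (hC : IsInducedCycle G C) : (G.induce C).edgeSet.ncard = C.ncard := by
  have := Fintype.ofFinite C
  have h := sum_ncard_neighborSet_inter_self (G := G) C
  rw [Finset.sum_congr rfl fun (x : C) _ ↦ hC.2 x x.2, Finset.sum_const, Finset.card_univ,
    ← Nat.card_eq_fintype_card, Nat.card_coe_set_eq, smul_eq_mul] at h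
  omega

-- A connected `K` has at least `|K| - 1` edges, so degree counting leaves at most two edges out of
-- `K`, and an even number of them.
lemma ncard_edgesBetween_sdiff (hC : IsInducedCycle G C) (hKC : K ⊂ C)
    (hK : (G.induce K).Connected) : (edgesBetween G K (C \ K)).ncard = 2 := by
  have := Fintype.ofFinite K
  have hdeg : ∀ x : K, (G.neighborSet x ∩ K).ncard + (G.neighborSet x ∩ (C \ K)).ncard = 2 := by
    intro x
    rw [← hC.2 x (hKC.subset x.2), ← Set.ncard_union_eq (by grind),
      ← Set.inter_union_distrib_left, Set.union_sdiff_cancel hKC.subset]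
  have hsum : 2 * (G.induce K).edgeSet.ncard + (edgesBetween G K (C \ K)).ncard = 2 * K.ncard := by
    rw [← sum_ncard_neighborSet_inter_self, ncard_edgesBetween, ← Finset.sum_add_distrib,
      Finset.sum_congr rfl fun x _ ↦ hdeg x, Finset.sum_const, Finset.card_univ,
      ← Nat.card_eq_fintype_card, Nat.card_coe_set_eq, smul_eq_mul, mul_comm]
  have htree : K.ncard ≤ (G.induce K).edgeSet.ncard + 1 := hK.card_vert_le_card_edgeSet_add_one
  obtain ⟨x, hx, y, hy, hxy⟩ := touches_sdiff hC.1 hKC (nonempty_of_connected hK)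
  have hpos : 0 < (edgesBetween G K (C \ K)).ncard :=
    (Set.ncard_pos (Set.toFinite _)).2 ⟨(x, y), hx, hy, hxy⟩
  omega

-- `K` and a component `Z` of `C \ K` both send exactly two edges to their complements, and all
-- edges leaving `Z` end in `K`; so all edges leaving `K` end in `Z`.
lemma connected_sdiff (hC : IsInducedCycle G C) (hKC : K ⊂ C) (hK : (G.induce K).Connected) :
    (G.induce (C \ K)).Connected := by
  obtain ⟨z, hz⟩ := Set.nonempty_of_ssubset hKC
  obtain ⟨Z, hZ, -, hZc, hZclosed⟩ := exists_component (G := G) hz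
  have hKne : K.Nonempty := nonempty_of_connected hK
  have hZC : Z ⊂ C := ⟨hZ.trans Set.sdiff_subset, fun h ↦ by
    obtain ⟨k, hk⟩ := hKne
    exact (hZ (h (hKC.subset hk))).2 hk⟩
  have hcut : edgesBetween G Z (C \ Z) ⊆ edgesBetween G (C \ K) K := by
    rintro ⟨u, v⟩ ⟨hu, hv, huv⟩
    refine ⟨hZ hu, by_contra fun hvK ↦ ?_, huv⟩
    exact hv.2 (nbhdIn_eq_empty_iff.1 hZclosed u hu v ⟨hv.1, hvK⟩ huv)
  have hcut' : edgesBetween G Z (C \ Z) = edgesBetween G (C \ K) K := by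
    refine Set.eq_of_subset_of_ncard_le hcut (le_of_eq ?_)
    rw [ncard_edgesBetween_comm, hC.ncard_edgesBetween_sdiff hKC hK,
      hC.ncard_edgesBetween_sdiff hZC hZc]
  have hunion : K ∪ Z = C := by
    refine eq_of_nbhdIn_eq_empty hC.1 (Set.union_subset hKC.subset hZC.subset)
      (hKne.mono Set.subset_union_left) (nbhdIn_eq_empty_iff.2 fun u hu v hv huv ↦ ?_)
    by_cases hvK : v ∈ K
    · exact Or.inl hvK
    rcases hu with hu | hu
    · exact Or.inr (hcut'.ge (show (v, u) ∈ edgesBetween G (C \ K) K from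
        ⟨⟨hv, hvK⟩, hu, huv.symm⟩)).1
    · exact Or.inr (nbhdIn_eq_empty_iff.1 hZclosed u hu v ⟨hv, hvK⟩ huv)
  have hZK : Disjoint Z K := Set.disjoint_left.2 fun v hv hvK ↦ (hZ hv).2 hvK
  rwa [← hunion, Set.union_sdiff_left, hZK.sdiff_eq_left]

lemma ncard_nbhdIn (hC : IsInducedCycle G C) (hKC : K ⊆ C) (hK : (G.induce K).Connected)
    (hnt : (C \ K).Nontrivial) : (nbhdIn G C K).ncard = 2 := by
  have hKC' : K ⊂ C := ⟨hKC, fun h ↦ hnt.nonempty.ne_empty (Set.sdiff_eq_empty.2 h)⟩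
  have hcompl := hC.connected_sdiff hKC' hK
  have hinj : Set.InjOn Prod.snd (edgesBetween G K (C \ K)) := by
    rintro ⟨k₁, y⟩ ⟨hk₁, hy, h₁⟩ ⟨k₂, _⟩ ⟨hk₂, -, h₂⟩ rfl
    by_contra hne
    have hyset : {y} = C \ K := by
      refine eq_of_nbhdIn_eq_empty hcompl (Set.singleton_subset_iff.2 hy)
        (Set.singleton_nonempty y) (nbhdIn_eq_empty_iff.2 ?_)
      rintro _ rfl v hv hyv
      rcases hC.eq_or_eq_of_adj hy.1 (hKC hk₁) (hKC hk₂) hv.1 (fun h ↦ hne (Prod.ext h rfl))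
        h₁.symm h₂.symm hyv with rfl | rfl
      exacts [(hv.2 hk₁).elim, (hv.2 hk₂).elim]
    exact Set.not_nontrivial_singleton (hyset ▸ hnt)
  rw [← hC.ncard_edgesBetween_sdiff hKC' hK, ← hinj.ncard_image]
  congr 1
  ext y
  constructor
  · rintro ⟨hy, k, hk, hky⟩
    exact ⟨(k, y), ⟨hk, hy, hky⟩, rfl⟩
  · rintro ⟨⟨k, _⟩, ⟨hk, hy, hky⟩, rfl⟩
    exact ⟨hy, k, hk, hky⟩

lemma eq_of_subset {D : Set V} (hC : IsInducedCycle G C) (hD : IsInducedCycle G D)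
    (h : C ⊆ D) : C = D := by
  refine eq_of_nbhdIn_eq_empty hD.1 h (nonempty_of_connected hC.1)
    (nbhdIn_eq_empty_iff.2 fun x hx y hy hxy ↦ ?_)
  have hN : G.neighborSet x ∩ C = G.neighborSet x ∩ D :=
    Set.eq_of_subset_of_ncard_le (Set.inter_subset_inter_right _ h)
      (by rw [hC.2 x hx, hD.2 x (h hx)])
  exact (hN.ge ⟨hxy, hy⟩).2

end IsInducedCycle

end InducedCycles

section Minors

variable {G : SimpleGraph V} {R X : Set V} {a b x y : V}

lemma hasMinor_completeBipartiteGraph {α β : Type*} {A : α → Set V} {B : β → Set V}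
    (hA : ∀ i, (G.induce (A i)).Connected) (hB : ∀ j, (G.induce (B j)).Connected)
    (hAA : Pairwise (Function.onFun Disjoint A)) (hBB : Pairwise (Function.onFun Disjoint B))
    (hAB : ∀ i j, Disjoint (A i) (B j)) (h : ∀ i j, Touches G (A i) (B j)) :
    HasMinor G (completeBipartiteGraph α β) := by
  refine ⟨Sum.elim A B, ?_, ?_, ?_⟩
  · rintro (i | j)
    exacts [hA i, hB j]
  · rintro (i | i) (j | j) hij
    exacts [hAA fun h ↦ hij (congrArg _ h), hAB i j, (hAB j i).symm,
      hBB fun h ↦ hij (congrArg _ h)]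
  · rintro (i | i) (j | j) hij
    · simp at hij
    · exact h i j
    · exact (h j i).symm
    · simp at hij

lemma hasMinor_completeBipartiteGraph_three (hab : a ≠ b) (hR : (G.induce R).Connected)
    (haR : a ∉ R) (hbR : b ∉ R) {ι : Type*} {B : ι → Set V}
    (hB : ∀ i, (G.induce (B i)).Connected)
    (hBB : Pairwise (Function.onFun Disjoint B))
    (h : ∀ i, a ∉ B i ∧ b ∉ B i ∧ Disjoint R (B i) ∧
      Touches G {a} (B i) ∧ Touches G {b} (B i) ∧ Touches G R (B i)) :
    HasMinor G (completeBipartiteGraph (Fin 3) ι) := by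
  refine hasMinor_completeBipartiteGraph (A := ![{a}, {b}, R]) ?_ hB ?_ hBB ?_ ?_
  · exact Fin.forall_fin_succ.2 ⟨connected_singleton a, Fin.forall_fin_two.2
      ⟨connected_singleton b, hR⟩⟩
  · intro i j hij
    fin_cases i <;> fin_cases j <;>
      simp_all [Function.onFun, ne_comm]
  · intro i j
    fin_cases i
    exacts [Set.disjoint_singleton_left.2 (h j).1, Set.disjoint_singleton_left.2 (h j).2.1,
      (h j).2.2.1]
  · intro i j
    fin_cases i
    exacts [(h j).2.2.2.1, (h j).2.2.2.2.1, (h j).2.2.2.2.2]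

/-- `f` is a family of branch sets of a complete minor of `G` with vertex set `ι`. -/
def IsCliqueModel {ι : Type*} (G : SimpleGraph V) (f : ι → Set V) : Prop :=
  (∀ i, (G.induce (f i)).Connected) ∧
    Pairwise fun i j ↦ Disjoint (f i) (f j) ∧ Touches G (f i) (f j)

lemma IsCliqueModel.hasMinor {ι : Type*} {f : ι → Set V} (hf : IsCliqueModel G f) :
    HasMinor G (completeGraph ι) :=
  ⟨f, hf.1, fun _ _ hij ↦ (hf.2 hij).1, fun _ _ hij ↦ (hf.2 hij).2⟩

lemma IsCliqueModel.cons {n : ℕ} {f : Fin n → Set V} (hf : IsCliqueModel G f)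
    (hX : (G.induce X).Connected) (h : ∀ i, Disjoint X (f i) ∧ Touches G X (f i)) :
    IsCliqueModel G (Fin.cons X f : Fin (n + 1) → Set V) := by
  refine ⟨Fin.cases hX hf.1, fun i j ↦ ?_⟩
  refine Fin.cases (Fin.cases (fun h ↦ (h rfl).elim) (fun j _ ↦ h j) j)
    (fun i ↦ Fin.cases (fun _ ↦ ⟨(h i).1.symm, (h i).2.symm⟩) (fun j hij ↦ ?_) j) i
  exact hf.2 fun h ↦ hij (congrArg _ h)

lemma hasMinor_completeGraph_five {T : Fin 3 → Set V} (hxy : G.Adj x y)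
    (hT : ∀ i, (G.induce (T i)).Connected) (hdisj : Pairwise (Function.onFun Disjoint T))
    (hTT : ∀ i, Touches G (T i) (T (i + 1))) (hx : ∀ i, x ∉ T i ∧ Touches G {x} (T i))
    (hy : ∀ i, y ∉ T i ∧ Touches G {y} (T i)) : HasMinor G (completeGraph (Fin 5)) := by
  have hmodel : IsCliqueModel G T := by
    refine ⟨hT, fun i j hij ↦ ⟨hdisj hij, ?_⟩⟩
    obtain rfl | rfl : j = i + 1 ∨ i = j + 1 := by clear hdisj; decide +revert
    exacts [hTT i, (hTT j).symm]
  exact ((hmodel.cons (connected_singleton y)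
    fun i ↦ ⟨Set.disjoint_singleton_left.2 (hy i).1, (hy i).2⟩).cons (connected_singleton x)
      (Fin.cases ⟨Set.disjoint_singleton.2 hxy.ne, x, rfl, y, rfl, hxy⟩
        fun i ↦ ⟨Set.disjoint_singleton_left.2 (hx i).1, (hx i).2⟩)).hasMinor

-- If two of the links `K` meet, then `x`, `y` and their union, against the three `P i`, form a
-- `K₃,₃` model. Disjoint links are absorbed into the `P i` to form a `K₅` model with `x` and `y`.
lemma hasMinor_of_pairwise_links {P : Fin 3 → Set V} (hxy : G.Adj x y)
    (hP : ∀ i, (G.induce (P i)).Connected) (hPP : Pairwise (Function.onFun Disjoint P))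
    (hx : ∀ i, x ∉ P i ∧ Touches G {x} (P i)) (hy : ∀ i, y ∉ P i ∧ Touches G {y} (P i))
    (hlink : ∀ i, Touches G (P i) (P (i + 1)) ∨ ∃ K, x ∉ K ∧ y ∉ K ∧ (∀ j, Disjoint K (P j)) ∧
      (G.induce K).Connected ∧ Touches G (P i) K ∧ Touches G K (P (i + 1))) :
    HasMinor G (completeGraph (Fin 5)) ∨
      HasMinor G (completeBipartiteGraph (Fin 3) (Fin 3)) := by
  rw [or_iff_not_imp_right]
  intro hK33
  have hext (i) : ∃ E, x ∉ E ∧ y ∉ E ∧ (∀ j, Disjoint E (P j)) ∧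
      (G.induce (P i ∪ E)).Connected ∧ Touches G (P i ∪ E) (P (i + 1)) ∧
      (E.Nonempty → (G.induce E).Connected ∧ Touches G E (P i) ∧ Touches G E (P (i + 1))) := by
    rcases hlink i with h | ⟨K, hxK, hyK, hKP, hK, hPK, hKP'⟩
    · exact ⟨∅, by simp, by simp, by simp, (Set.union_empty (P i)).symm ▸ hP i, by simpa using h,
        by simp⟩
    · exact ⟨K, hxK, hyK, hKP, connected_union (hP i) hK hPK,
        hKP'.mono Set.subset_union_right subset_rfl, fun _ ↦ ⟨hK, hPK.symm, hKP'⟩⟩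
  choose E hxE hyE hEP hPE hPET hE using hext
  have hEE {i j} (hij : i ≠ j) : Disjoint (E i) (E j) := by
    by_contra hmeet
    obtain ⟨w, hwi, hwj⟩ := Set.not_disjoint_iff.1 hmeet
    obtain ⟨hi, hi₁, hi₂⟩ := hE i ⟨w, hwi⟩
    obtain ⟨hj, hj₁, hj₂⟩ := hE j ⟨w, hwj⟩
    have hT (l) : Touches G (E i ∪ E j) (P l) := by
      have hcover : ∀ i j l : Fin 3, i ≠ j → l = i ∨ l = i + 1 ∨ l = j ∨ l = j + 1 := by decide
      rcases hcover i j l hij with rfl | rfl | rfl | rfl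
      exacts [hi₁.mono Set.subset_union_left subset_rfl, hi₂.mono Set.subset_union_left subset_rfl,
        hj₁.mono Set.subset_union_right subset_rfl, hj₂.mono Set.subset_union_right subset_rfl]
    exact hK33 <| hasMinor_completeBipartiteGraph_three hxy.ne
      (induce_union_connected hi.preconnected hj.preconnected ⟨w, hwi, hwj⟩)
      (not_or.2 ⟨hxE i, hxE j⟩) (not_or.2 ⟨hyE i, hyE j⟩) hP hPP fun l ↦
        ⟨(hx l).1, (hy l).1, Set.disjoint_union_left.2 ⟨hEP i l, hEP j l⟩, (hx l).2, (hy l).2, hT l⟩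
  refine hasMinor_completeGraph_five hxy hPE (fun i j hij ↦ ?_)
    (fun i ↦ (hPET i).mono subset_rfl Set.subset_union_left)
    (fun i ↦ ⟨not_or.2 ⟨(hx i).1, hxE i⟩, (hx i).2.mono subset_rfl Set.subset_union_left⟩)
    (fun i ↦ ⟨not_or.2 ⟨(hy i).1, hyE i⟩, (hy i).2.mono subset_rfl Set.subset_union_left⟩)
  exact Set.disjoint_union_left.2 ⟨Set.disjoint_union_right.2 ⟨hPP hij, (hEP j i).symm⟩,
    Set.disjoint_union_right.2 ⟨hEP i j, hEE hij⟩⟩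

end Minors

section Arcs

variable [Finite V] {G : SimpleGraph V} {C K L : Set V} {a b x : V}

namespace IsInducedCycle

lemma connected_sdiff_insert_insert (hC : IsInducedCycle G C) (hK : (G.induce K).Connected)
    (hKC : K ⊆ C) (hN : nbhdIn G C K = {a, b}) (hne : (C \ insert a (insert b K)).Nonempty) :
    (G.induce (C \ insert a (insert b K))).Connected := by
  obtain ⟨⟨ha, -⟩, u, hu, hua⟩ : a ∈ nbhdIn G C K := hN ▸ Set.mem_insert a _
  obtain ⟨⟨hb, -⟩, v, hv, hvb⟩ : b ∈ nbhdIn G C K := hN ▸ Set.mem_insert_of_mem a rfl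
  refine hC.connected_sdiff ⟨Set.insert_subset ha (Set.insert_subset hb hKC), fun h ↦ ?_⟩
    (connected_insert (connected_insert hK ⟨v, hv, hvb.symm⟩)
      ⟨u, Set.mem_insert_of_mem b hu, hua.symm⟩)
  exact hne.ne_empty (Set.sdiff_eq_empty.2 h)

lemma nbhdIn_eq_pair (hC : IsInducedCycle G C) (ha : a ∈ C) (hb : b ∈ C) (hab : a ≠ b)
    (hKC : K ⊆ C \ {a, b}) (hK : (G.induce K).Connected) (hN : nbhdIn G C K ⊆ {a, b}) :
    nbhdIn G C K = {a, b} := by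
  have hnt : (C \ K).Nontrivial :=
    ⟨a, ⟨ha, fun h ↦ (hKC h).2 (Or.inl rfl)⟩, b, ⟨hb, fun h ↦ (hKC h).2 (Or.inr rfl)⟩, hab⟩
  refine Set.eq_of_subset_of_ncard_le hN (le_of_eq ?_)
  rw [hC.ncard_nbhdIn (hKC.trans Set.sdiff_subset) hK hnt, Set.ncard_pair hab]

lemma nbhdIn_eq_pair_of_touches (hC : IsInducedCycle G C) (ha : a ∈ C) (hb : b ∈ C) (hab : a ≠ b)
    (hKC : K ⊆ C \ {a, b}) (hK : (G.induce K).Connected) (haK : Touches G {a} K)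
    (hbK : Touches G {b} K) : nbhdIn G C K = {a, b} := by
  have haK' : a ∉ K := fun h ↦ (hKC h).2 (Or.inl rfl)
  have hbK' : b ∉ K := fun h ↦ (hKC h).2 (Or.inr rfl)
  have hnt : (C \ K).Nontrivial := ⟨a, ⟨ha, haK'⟩, b, ⟨hb, hbK'⟩, hab⟩
  have hsub : {a, b} ⊆ nbhdIn G C K := Set.insert_subset (mem_nbhdIn_iff.2 ⟨⟨ha, haK'⟩, haK⟩)
    (Set.singleton_subset_iff.2 (mem_nbhdIn_iff.2 ⟨⟨hb, hbK'⟩, hbK⟩))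
  refine (Set.eq_of_subset_of_ncard_le hsub (le_of_eq ?_)).symm
  rw [hC.ncard_nbhdIn (hKC.trans Set.sdiff_subset) hK hnt, Set.ncard_pair hab]

lemma eq_sdiff_insert_insert (hC : IsInducedCycle G C) (hK : (G.induce K).Connected)
    (hKC : K ⊆ C) (hNK : nbhdIn G C K = {a, b}) (hL : L ⊆ C \ insert a (insert b K))
    (hLne : L.Nonempty) (hNL : nbhdIn G C L = {a, b}) : L = C \ insert a (insert b K) := by
  refine eq_of_nbhdIn_eq_empty (hC.connected_sdiff_insert_insert hK hKC hNK (hLne.mono hL)) hL hLne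
    (nbhdIn_eq_empty_iff.2 fun u hu v hv huv ↦ by_contra fun hvL ↦ hv.2 ?_)
  have hvN : v ∈ nbhdIn G C L := ⟨⟨hv.1, hvL⟩, u, hu, huv⟩
  rw [hNL] at hvN
  grind

lemma not_subset_of_touches (hC : IsInducedCycle G C) (hK : (G.induce K).Connected) (hKC : K ⊆ C)
    (hNK : nbhdIn G C K = {a, b}) (hab : a ≠ b) (hL : (G.induce L).Connected)
    (hLK : Disjoint L (insert a (insert b K))) (haL : Touches G {a} L) (hbL : Touches G {b} L)
    (hx : x ∈ C \ insert a (insert b K)) (hxL : x ∉ L) : ¬ L ⊆ C := by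
  intro hLC
  have ha : a ∈ C := (hNK.ge (Or.inl rfl)).1.1
  have hb : b ∈ C := (hNK.ge (Or.inr rfl)).1.1
  have hNL := hC.nbhdIn_eq_pair_of_touches ha hb hab (by grind) hL haL hbL
  have hLeq := hC.eq_sdiff_insert_insert hK hKC hNK (by grind) (nonempty_of_connected hL) hNL
  exact hxL (hLeq ▸ hx)

lemma exists_arcs (hC : IsInducedCycle G C) (ha : a ∈ C) (hb : b ∈ C) (hab : a ≠ b)
    (hadj : ¬ G.Adj a b) (hx : x ∈ C \ {a, b}) :
    ∃ A ⊆ C \ {a, b}, x ∈ A ∧ (G.induce A).Connected ∧ nbhdIn G C A = {a, b} ∧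
      (G.induce ((C \ {a, b}) \ A)).Connected ∧ nbhdIn G C ((C \ {a, b}) \ A) = {a, b} := by
  obtain ⟨A, hA, hxA, hAc, hAclosed⟩ := exists_component (G := G) hx
  rw [nbhdIn_eq_empty_iff] at hAclosed
  have hN : nbhdIn G C A = {a, b} := hC.nbhdIn_eq_pair ha hb hab hA hAc fun v ⟨hv, u, hu, huv⟩ ↦
    by_contra fun hvab ↦ hv.2 (hAclosed u hu v ⟨hv.1, hvab⟩ huv)
  have hsdiff : (C \ {a, b}) \ A = C \ insert a (insert b A) := by grind
  have hne : ((C \ {a, b}) \ A).Nonempty := by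
    by_contra hempty
    rw [Set.not_nonempty_iff_eq_empty, Set.sdiff_eq_empty] at hempty
    have hpair : C \ A = {a, b} := by grind
    have hconn := hC.connected_sdiff ⟨hA.trans Set.sdiff_subset, fun h ↦ (hA (h ha)).2 (Or.inl rfl)⟩
      hAc
    obtain ⟨_, rfl, v, ⟨hv, hva⟩, hav⟩ := touches_sdiff (Z := {a}) hconn
      (by rw [hpair]; grind) (Set.singleton_nonempty a)
    rw [hpair] at hv
    exact hadj (hv.resolve_left hva ▸ hav)
  have hBc : (G.induce ((C \ {a, b}) \ A)).Connected :=
    hsdiff ▸ hC.connected_sdiff_insert_insert hAc (hA.trans Set.sdiff_subset) hN (hsdiff ▸ hne)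
  refine ⟨A, hA, hxA, hAc, hN, hBc,
    hC.nbhdIn_eq_pair ha hb hab Set.sdiff_subset hBc fun v ⟨hv, u, hu, huv⟩ ↦ ?_⟩
  by_contra hvab
  exact hu.2 (hAclosed v (by_contra fun h ↦ hv.2 ⟨⟨hv.1, hvab⟩, h⟩) u hu.1 huv.symm)

end IsInducedCycle

end Arcs

section PeripheralCycles

variable [Finite V] {G : SimpleGraph V} {C₁ C₂ Q : Set V} {a b x y z : V}

/-- `C` is the vertex set of a peripheral cycle of `G`: an induced cycle whose complement is
connected. In a 3-connected plane graph these are the boundaries of the faces. -/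
def IsPeripheral (G : SimpleGraph V) (C : Set V) : Prop :=
  IsInducedCycle G C ∧ (G.induce Cᶜ).Connected

lemma exists_adj_notMem_union (h₁ : IsInducedCycle G C₁) (h₂ : IsInducedCycle G C₂)
    (hx₁ : x ∈ C₁) (hx₂ : x ∈ C₂) (hy₁ : y ∈ C₁) (hy₂ : y ∈ C₂) (hxy : G.Adj x y)
    (hdeg : 4 ≤ (G.neighborSet x).ncard) : ∃ p, p ∉ C₁ ∪ C₂ ∧ G.Adj x p := by
  by_contra! h
  have hcover : G.neighborSet x ∩ C₁ ∪ G.neighborSet x ∩ C₂ = G.neighborSet x := by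
    rw [← Set.inter_union_distrib_left, Set.inter_eq_left]
    exact fun p hp ↦ by_contra fun hpC ↦ h p hpC hp
  have hunion := Set.ncard_union_add_ncard_inter (G.neighborSet x ∩ C₁) (G.neighborSet x ∩ C₂)
  have hinter : 0 < (G.neighborSet x ∩ C₁ ∩ (G.neighborSet x ∩ C₂)).ncard :=
    (Set.ncard_pos (Set.toFinite _)).2 ⟨y, ⟨hxy, hy₁⟩, hxy, hy₂⟩
  rw [hcover, h₁.2 x hx₁, h₂.2 x hx₂] at hunion
  omega

-- One side of the model consists of `a`, `b` and a set `R` outside both cycles adjacent to both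
-- arcs `A`, `A'` of `C₁` between `a` and `b`; the other side is `A`, `A'` and `Q` extended to reach
-- `R`.
lemma hasMinor_completeBipartiteGraph_of_bridge (h₁ : IsPeripheral G C₁) (h₂ : IsPeripheral G C₂)
    (hQ : (G.induce Q).Connected) (hQC : Q ⊆ C₂ \ C₁) (hNQ : nbhdIn G C₂ Q = {a, b})
    (ha : a ∈ C₁) (hb : b ∈ C₁) (hab : a ≠ b) (hnadj : ¬ G.Adj a b)
    (hx : x ∈ C₁ ∩ C₂) (hy : y ∈ C₁ ∩ C₂) (hxab : x ∉ ({a, b} : Set V)) (hxy : G.Adj x y)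
    (hdeg : 4 ≤ (G.neighborSet x).ncard) :
    HasMinor G (completeBipartiteGraph (Fin 3) (Fin 3)) := by
  have touch {U X : Set V} {c : V} (hN : nbhdIn G U X = {a, b}) (hc : c ∈ ({a, b} : Set V)) :
      Touches G {c} X := (mem_nbhdIn_iff.1 (hN ▸ hc)).2
  obtain ⟨A', hA'C, hxA', hA', hNA', hA, hNA⟩ := h₁.1.exists_arcs ha hb hab hnadj ⟨hx.1, hxab⟩
  set A := (C₁ \ {a, b}) \ A' with hAdef
  have hAA' : ¬ Touches G A A' := by
    rintro ⟨u, hu, v, hv, huv⟩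
    have hvN : v ∈ nbhdIn G C₁ A := ⟨⟨(hA'C hv).1, fun h ↦ h.2 hv⟩, u, hu, huv⟩
    exact (hA'C hv).2 (hNA ▸ hvN)
  have haC₂ : a ∈ C₂ := (hNQ.ge (Or.inl rfl)).1.1
  have hbC₂ : b ∈ C₂ := (hNQ.ge (Or.inr rfl)).1.1
  have hAC₂ : ¬ A ⊆ C₂ := h₂.1.not_subset_of_touches hQ (hQC.trans Set.sdiff_subset) hNQ hab hA
    (by grind) (touch hNA (Or.inl rfl)) (touch hNA (Or.inr rfl)) (x := x) (by grind) (by grind)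
  have hxout := exists_adj_notMem_union h₁.1 h₂.1 hx.1 hx.2 hy.1 hy.2 hxy hdeg
  obtain ⟨R, hRC, hR, hAR, hA'R⟩ := exists_link_compl h₂.2 hAA' Set.disjoint_sdiff_left hAC₂ hxA'
    (by grind)
  obtain ⟨Q', hQQ', hQ'C, hQ', hQ'R⟩ := exists_superset_touches h₁.2 (P := Q) (Q := R)
    (by grind) (by grind) (by grind) hQ (nonempty_of_connected hR)
  have hAC : A ⊆ C₁ \ {a, b} := Set.sdiff_subset
  have hdisj : Disjoint A A' := Set.disjoint_sdiff_left
  clear_value A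
  have hsep : (a ∉ A ∧ b ∉ A ∧ Disjoint R A) ∧ (a ∉ A' ∧ b ∉ A' ∧ Disjoint R A') ∧
      (a ∉ Q' ∧ b ∉ Q' ∧ Disjoint R Q') ∧ Disjoint A Q' ∧ Disjoint A' Q' := by
    clear hNQ hNA hNA'
    grind
  obtain ⟨⟨haA, hbA, hRA⟩, ⟨haA', hbA', hRA'⟩, ⟨haQ', hbQ', hRQ'⟩, hAQ', hA'Q'⟩ := hsep
  refine hasMinor_completeBipartiteGraph_three (B := ![A, A', Q']) hab hR (by grind) (by grind)
    (Fin.forall_fin_succ.2 ⟨hA, Fin.forall_fin_two.2 ⟨hA', hQ'⟩⟩) ?_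
    (Fin.forall_fin_succ.2 ⟨?_, Fin.forall_fin_two.2 ⟨?_, ?_⟩⟩)
  · intro i j hij
    fin_cases i <;> fin_cases j <;> simp_all [Function.onFun, disjoint_comm]
  · exact ⟨haA, hbA, hRA, touch hNA (Or.inl rfl), touch hNA (Or.inr rfl), hAR.symm⟩
  · exact ⟨haA', hbA', hRA', touch hNA' (Or.inl rfl), touch hNA' (Or.inr rfl), hA'R.symm⟩
  · exact ⟨haQ', hbQ', hRQ', (touch hNQ (Or.inl rfl)).mono subset_rfl hQQ',
      (touch hNQ (Or.inr rfl)).mono subset_rfl hQQ', hQ'R.symm⟩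

lemma exists_nbhdIn_eq_pair_of_adj (h₁ : IsInducedCycle G C₁) (h₂ : IsInducedCycle G C₂)
    (hne : C₁ ≠ C₂) (hx : x ∈ C₁ ∩ C₂) (hy : y ∈ C₁ ∩ C₂) (hz : z ∈ C₁ ∩ C₂)
    (hxy : G.Adj x y) (hzx : z ≠ x) (hzy : z ≠ y) :
    ∃ Q ⊆ C₂ \ C₁, (G.induce Q).Connected ∧
      ∃ a ∈ C₁, ∃ b ∈ C₁, a ≠ b ∧ ¬ G.Adj a b ∧ nbhdIn G C₂ Q = {a, b} := by
  obtain ⟨q, hq₂, hq₁⟩ : ∃ q ∈ C₂, q ∉ C₁ :=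
    Set.not_subset.1 fun h ↦ hne (h₂.eq_of_subset h₁ h).symm
  obtain ⟨Q, hQC, -, hQ, hNQ⟩ := exists_component (G := G) (S := C₂ \ C₁) ⟨hq₂, hq₁⟩
  rw [nbhdIn_eq_empty_iff] at hNQ
  have hxyQ : x ∉ Q ∧ y ∉ Q ∧ z ∉ Q := by grind
  obtain ⟨a, b, hab, hN⟩ := Set.ncard_eq_two.1 <| h₂.ncard_nbhdIn (hQC.trans Set.sdiff_subset) hQ
    ⟨x, ⟨hx.2, hxyQ.1⟩, y, ⟨hy.2, hxyQ.2.1⟩, hxy.ne⟩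
  have hNC : nbhdIn G C₂ Q ⊆ C₁ := fun c hc ↦ by
    obtain ⟨⟨hc₂, hcQ⟩, q, hq, hqc⟩ := hc
    exact by_contra fun hc₁ ↦ hcQ (hNQ q hq c ⟨hc₂, hc₁⟩ hqc)
  refine ⟨Q, hQC, hQ, a, hNC (hN.ge (Or.inl rfl)), b, hNC (hN.ge (Or.inr rfl)), hab, ?_, hN⟩
  intro habadj
  obtain ⟨w, hw, hwab⟩ : ∃ w ∈ C₁ ∩ C₂, w ∉ ({a, b} : Set V) := by
    by_contra! h
    have hx' := h x hx
    have hy' := h y hy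
    have hz' := h z hz
    have hxy' := hxy.ne
    grind
  have hab_sub : {a, b} ⊆ C₂ := hN ▸ fun c hc ↦ hc.1.1
  have habQ : Q ⊆ C₂ \ {a, b} := fun q hq ↦
    ⟨(hQC hq).1, fun h ↦ (hN.ge h).1.2 hq⟩
  have hconn : (G.induce (C₂ \ {a, b})).Connected :=
    h₂.connected_sdiff ⟨hab_sub, fun h ↦ hwab (h hw.2)⟩
      (connected_insert (connected_singleton b) ⟨b, rfl, habadj⟩)
  have hQ_eq := eq_of_nbhdIn_eq_empty hconn habQ (nonempty_of_connected hQ) <|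
    nbhdIn_eq_empty_iff.2 fun q hq c hc hqc ↦
      by_contra fun hcQ ↦ hc.2 (hN.le ⟨⟨hc.1, hcQ⟩, q, hq, hqc⟩)
  exact (hQC (hQ_eq.ge ⟨hw.2, hwab⟩)).2 hw.1

lemma IsPeripheral.hasMinor_of_common (h₁ : IsPeripheral G C₁) (h₂ : IsPeripheral G C₂)
    (hne : C₁ ≠ C₂) (hdeg : ∀ u, 4 ≤ (G.neighborSet u).ncard)
    (hx : x ∈ C₁ ∩ C₂) (hy : y ∈ C₁ ∩ C₂) (hz : z ∈ C₁ ∩ C₂)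
    (hxy : G.Adj x y) (hzx : z ≠ x) (hzy : z ≠ y) :
    HasMinor G (completeBipartiteGraph (Fin 3) (Fin 3)) := by
  obtain ⟨Q, hQC, hQ, a, ha, b, hb, hab, hnadj, hN⟩ :=
    exists_nbhdIn_eq_pair_of_adj h₁.1 h₂.1 hne hx hy hz hxy hzx hzy
  by_cases hxab : x ∈ ({a, b} : Set V)
  · have hyab : y ∉ ({a, b} : Set V) := by
      rintro (rfl | rfl) <;> rcases hxab with rfl | rfl
      · exact G.loopless.irrefl _ hxy
      · exact hnadj hxy.symm
      · exact hnadj hxy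
      · exact G.loopless.irrefl _ hxy
    exact hasMinor_completeBipartiteGraph_of_bridge h₁ h₂ hQ hQC hN ha hb hab hnadj hy hx hyab
      hxy.symm (hdeg y)
  · exact hasMinor_completeBipartiteGraph_of_bridge h₁ h₂ hQ hQC hN ha hb hab hnadj hx hy hxab
      hxy (hdeg x)

lemma hasMinor_of_three_peripheral {C : Fin 3 → Set V} (hC : ∀ i, IsPeripheral G (C i))
    (hinj : Function.Injective C) (hdeg : ∀ u, 4 ≤ (G.neighborSet u).ncard)
    (hx : ∀ i, x ∈ C i) (hy : ∀ i, y ∈ C i) (hxy : G.Adj x y) :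
    HasMinor G (completeGraph (Fin 5)) ∨
      HasMinor G (completeBipartiteGraph (Fin 3) (Fin 3)) := by
  by_cases hcommon : ∃ i j, i ≠ j ∧ ∃ z, z ≠ x ∧ z ≠ y ∧ z ∈ C i ∩ C j
  · obtain ⟨i, j, hij, z, hzx, hzy, hz⟩ := hcommon
    exact Or.inr <| (hC i).hasMinor_of_common (hC j) (hinj.ne hij) hdeg ⟨hx i, hx j⟩
      ⟨hy i, hy j⟩ hz hxy hzx hzy
  push Not at hcommon
  have hsep {i j} (hij : i ≠ j) : C i \ {x, y} ⊆ (C j)ᶜ := fun z hz hzj ↦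
    hcommon i j hij z (fun h ↦ hz.2 (Or.inl h)) (fun h ↦ hz.2 (Or.inr h)) ⟨hz.1, hzj⟩
  have htouch {u v : V} (i) (hu : u ∈ C i) : Touches G {u} (C i \ {u, v}) := by
    obtain ⟨z, hz, huz, hzv⟩ := (hC i).1.exists_adj_ne hu v
    exact ⟨u, rfl, z, ⟨hz, by simp [hzv, huz.ne']⟩, huz⟩
  have hconn (i) : (G.induce (C i \ {x, y})).Connected := by
    obtain ⟨-, -, z, hz, -⟩ := htouch (v := y) i (hx i)
    refine (hC i).1.connected_sdiff ⟨Set.pair_subset (hx i) (hy i), fun h ↦ hz.2 (h hz.1)⟩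
      (connected_insert (connected_singleton y) ⟨y, rfl, hxy⟩)
  have hdisj : Pairwise (Function.onFun Disjoint fun i ↦ C i \ {x, y}) := fun i j hij ↦
    Set.disjoint_left.2 fun z hzi hzj ↦ hsep hij hzi hzj.1
  refine hasMinor_of_pairwise_links hxy hconn hdisj (fun i ↦ ⟨by simp, htouch i (hx i)⟩)
    (fun i ↦ ⟨by simp, Set.pair_comm y x ▸ htouch i (hy i)⟩) fun i ↦ ?_
  have hi : i ≠ i + 1 ∧ i ≠ i + 2 ∧ i + 1 ≠ i + 2 := by clear * -; decide +revert
  refine (touches_or_exists_link (hC (i + 2)).2 (hsep hi.2.1) (hsep hi.2.2) (hdisj hi.1)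
    (nonempty_of_connected (hconn i)) (nonempty_of_connected (hconn (i + 1)))).imp_right ?_
  rintro ⟨K, hKS, hK, hKi, hKi'⟩
  refine ⟨K, fun h ↦ (hKS h).1 (hx _), fun h ↦ (hKS h).1 (hy _), fun j ↦ ?_, hK, hKi, hKi'⟩
  have hj : j = i ∨ j = i + 1 ∨ j = i + 2 := by clear * -; decide +revert
  refine Set.disjoint_left.2 fun z hzK hzj ↦ ?_
  rcases hj with rfl | rfl | rfl
  exacts [(hKS hzK).2 (Or.inl hzj), (hKS hzK).2 (Or.inr hzj), (hKS hzK).1 hzj.1]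

end PeripheralCycles

section Coboundary

variable {G : SimpleGraph V} {S T : Set V} {ω : Sym2 V → ZMod 2}

/-- The coboundary modulo 2 of a vertex potential: it labels each edge with the sum of the
potentials of its ends. -/
def coboundary (G : SimpleGraph V) : (V → ZMod 2) →ₗ[ZMod 2] (G.edgeSet → ZMod 2) where
  toFun φ e := (e.1.map φ).add
  map_add' φ ψ := by
    ext ⟨e, he⟩
    induction e with | h x y => exact add_add_add_comm _ _ _ _
  map_smul' c φ := by
    ext ⟨e, he⟩
    induction e with | h x y => exact (mul_add _ _ _).symm

lemma coboundary_eq_iff {φ : V → ZMod 2} {w : G.edgeSet → ZMod 2} :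
    coboundary G φ = w ↔ ∀ x y, ∀ h : G.Adj x y, w ⟨s(x, y), h⟩ = φ x + φ y := by
  refine ⟨fun h x y hxy ↦ h ▸ rfl, fun h ↦ ?_⟩
  ext ⟨e, he⟩
  induction e with | h x y => exact (h x y he).symm

lemma eq_of_forall_adj {α : Type*} (hG : G.Connected) {f : V → α}
    (h : ∀ x y, G.Adj x y → f x = f y) (x y : V) : f x = f y := by
  obtain ⟨p⟩ := hG.preconnected x y
  induction p with
  | nil => rfl
  | cons hxz _ ih => exact (h _ _ hxz).trans ih

lemma finrank_range_coboundary_add_one [Finite V] (hG : G.Connected) :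
    Module.finrank (ZMod 2) (LinearMap.range (coboundary G)) + 1 = Nat.card V := by
  have := Fintype.ofFinite V
  have := hG.nonempty
  obtain ⟨z⟩ := hG.nonempty
  have hker : LinearMap.ker (coboundary G) = Submodule.span (ZMod 2) {1} := by
    ext φ
    rw [LinearMap.mem_ker, coboundary_eq_iff, Submodule.mem_span_singleton]
    constructor
    · intro h
      refine ⟨φ z, funext fun y ↦ ?_⟩
      rw [Pi.smul_apply, Pi.one_apply, smul_eq_mul, mul_one]
      exact eq_of_forall_adj hG (fun x y hxy ↦ CharTwo.add_eq_zero.1 (h x y hxy).symm) z y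
    · rintro ⟨c, rfl⟩ x y -
      exact (CharTwo.add_self_eq_zero _).symm
  rw [← Module.finrank_fintype_fun_eq_card (ZMod 2) |>.trans Nat.card_eq_fintype_card.symm,
    ← LinearMap.finrank_range_add_finrank_ker (coboundary G), hker,
    finrank_span_singleton one_ne_zero]

/-- `φ` is a potential for the edge labelling `ω` modulo 2 on the edges of `G` inside `S`. -/
def IsPotentialOn (G : SimpleGraph V) (S : Set V) (ω : Sym2 V → ZMod 2) (φ : V → ZMod 2) : Prop :=
  ∀ x ∈ S, ∀ y ∈ S, G.Adj x y → ω s(x, y) = φ x + φ y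

/-- The edge labellings modulo 2 that have a potential on the edges of `G` inside `S`. -/
def balancedOn (G : SimpleGraph V) (S : Set V) : Submodule (ZMod 2) (Sym2 V → ZMod 2) :=
  (LinearMap.range (coboundary (G.induce S))).comap
    (LinearMap.funLeft (ZMod 2) (ZMod 2) fun e : (G.induce S).edgeSet ↦ e.1.map Subtype.val)

lemma mem_balancedOn_iff : ω ∈ balancedOn G S ↔ ∃ φ, IsPotentialOn G S ω φ := by
  classical
  simp only [balancedOn, Submodule.mem_comap, LinearMap.mem_range, coboundary_eq_iff]
  constructor
  · rintro ⟨φ, hφ⟩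
    refine ⟨fun x ↦ if hx : x ∈ S then φ ⟨x, hx⟩ else 0, fun x hx y hy hxy ↦ ?_⟩
    simpa [hx, hy] using hφ ⟨x, hx⟩ ⟨y, hy⟩ hxy
  · rintro ⟨φ, hφ⟩
    exact ⟨fun x ↦ φ x, fun x y hxy ↦ hφ x x.2 y y.2 hxy⟩

lemma balancedOn_anti (h : S ⊆ T) : balancedOn G T ≤ balancedOn G S := by
  simp only [SetLike.le_def, mem_balancedOn_iff]
  exact fun ω ⟨φ, hφ⟩ ↦ ⟨φ, fun x hx y hy ↦ hφ x (h hx) y (h hy)⟩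

lemma finrank_quotient_balancedOn [Finite V] (hS : (G.induce S).Connected) :
    Module.finrank (ZMod 2) ((Sym2 V → ZMod 2) ⧸ balancedOn G S) + S.ncard =
      (G.induce S).edgeSet.ncard + 1 := by
  let ι (e : (G.induce S).edgeSet) : Sym2 V := e.1.map Subtype.val
  have hι : Function.Injective ι :=
    (Sym2.map.injective Subtype.val_injective).comp Subtype.val_injective
  let f := (LinearMap.range (coboundary (G.induce S))).mkQ ∘ₗ LinearMap.funLeft (ZMod 2) (ZMod 2) ι
  have hf : Function.Surjective f := (Submodule.mkQ_surjective _).comp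
    (LinearMap.funLeft_surjective_of_injective (ZMod 2) (ZMod 2) ι hι)
  have hker : LinearMap.ker f = balancedOn G S := by
    rw [LinearMap.ker_comp, Submodule.ker_mkQ, balancedOn]
  have hquot := (f.quotKerEquivOfSurjective hf).finrank_eq
  have := Fintype.ofFinite (G.induce S).edgeSet
  have hadd := Submodule.finrank_quotient_add_finrank (LinearMap.range (coboundary (G.induce S)))
  have hrank := finrank_range_coboundary_add_one hS
  rw [Module.finrank_fintype_fun_eq_card, ← Nat.card_eq_fintype_card, Nat.card_coe_set_eq] at hadd
  rw [Nat.card_coe_set_eq] at hrank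
  rw [hker] at hquot
  omega

lemma finrank_quotient_iInf_le {ι K M : Type*} [Fintype ι] [Field K] [AddCommGroup M] [Module K M]
    [FiniteDimensional K M] (p : ι → Submodule K M) :
    Module.finrank K (M ⧸ ⨅ i, p i) ≤ ∑ i, Module.finrank K (M ⧸ p i) := by
  have hker : LinearMap.ker (LinearMap.pi fun i ↦ (p i).mkQ) = ⨅ i, p i := by
    simp [LinearMap.ker_pi]
  rw [← hker, (LinearMap.quotKerEquivRange _).finrank_eq, ← Module.finrank_pi_fintype K]
  exact Submodule.finrank_le _

end Coboundary

section Balance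

variable {G : SimpleGraph V} {S T U X Z : Set V} {x : V} {ω : Sym2 V → ZMod 2}
  {φ : V → ZMod 2}

lemma IsPotentialOn.exists_eqOn (hφ : IsPotentialOn G S ω φ) (hX : (G.induce X).Connected)
    (hXS : X ⊆ S) (hXT : X ⊆ T) (hT : ω ∈ balancedOn G T) :
    ∃ ψ, IsPotentialOn G T ω ψ ∧ Set.EqOn ψ φ X := by
  obtain ⟨ψ, hψ⟩ := mem_balancedOn_iff.1 hT
  obtain ⟨z, hz⟩ := nonempty_of_connected hX
  refine ⟨fun x ↦ ψ x + (ψ z + φ z), fun x hx y hy hxy ↦ ?_, fun x hx ↦ ?_⟩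
  · rw [hψ x hx y hy hxy]
    linear_combination -CharTwo.add_self_eq_zero (ψ z + φ z)
  · have hconst := eq_of_forall_adj hX (f := fun u ↦ ψ u + φ u) (fun u v huv ↦ by
      have hψφ := (hψ u (hXT u.2) v (hXT v.2) huv).symm.trans (hφ u (hXS u.2) v (hXS v.2) huv)
      linear_combination hψφ + CharTwo.add_self_eq_zero (φ u) - CharTwo.add_self_eq_zero (ψ v))
    linear_combination CharTwo.add_self_eq_zero (ψ x) - hconst ⟨x, hx⟩ ⟨z, hz⟩

lemma exists_forall_ne_eq {c : Fin 3 → V} (hc : Function.Injective c) {ψ : Fin 3 → V → ZMod 2}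
    (h : ∀ i j k, i ≠ k → j ≠ k → ψ i (c k) = ψ j (c k)) (u : V) :
    ∃ p k, ∀ i, i ≠ k → u ≠ c i ∧ ψ i u = p := by
  by_cases hu : ∃ k, u = c k
  · obtain ⟨k, rfl⟩ := hu
    have hk : k + 1 ≠ k := by decide +revert
    exact ⟨ψ (k + 1) (c k), k, fun i hi ↦ ⟨hc.ne hi.symm, h i (k + 1) k hi hk⟩⟩
  · have hpigeon : ∀ p : Fin 3 → ZMod 2, ∃ q k, ∀ i, i ≠ k → p i = q := by decide
    obtain ⟨q, k, hk⟩ := hpigeon fun i ↦ ψ i u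
    exact ⟨q, k, fun i hi ↦ ⟨not_exists.1 hu i, hk i hi⟩⟩

lemma exists_injective_of_le_ncard [Finite S] {n : ℕ} (h : n ≤ S.ncard) :
    ∃ c : Fin n → V, Function.Injective c ∧ ∀ i, c i ∈ S :=
  ⟨fun i ↦ (Finite.equivFin S).symm (Fin.castLE h i), Subtype.val_injective.comp
    ((Finite.equivFin S).symm.injective.comp (Fin.castLE_injective h)), fun _ ↦ Subtype.coe_prop _⟩

-- Potentials on `U \ {c i}` for three neighbours `c i` of `X`, normalized to agree on `X`, also
-- agree at each `c k` where they apply. The majority value at each vertex glues them together.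
lemma mem_balancedOn_of_three_le_ncard_nbhdIn [Finite V] (hX : (G.induce X).Connected)
    (hXU : X ⊆ U) (h3 : 3 ≤ (nbhdIn G U X).ncard)
    (h : ∀ y ∈ nbhdIn G U X, ω ∈ balancedOn G (U \ {y})) :
    ω ∈ balancedOn G U := by
  obtain ⟨c, hc, hcN⟩ := exists_injective_of_le_ncard h3
  have hXc (i) : X ⊆ U \ {c i} := fun y hy ↦ ⟨hXU hy, fun h ↦ (hcN i).1.2 (h ▸ hy)⟩
  obtain ⟨φ, hφ⟩ := mem_balancedOn_iff.1 (h _ (hcN 0))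
  choose ψ hψ hψφ using fun i ↦ hφ.exists_eqOn hX (hXc 0) (hXc i) (h _ (hcN i))
  have hagree (i j k) (hik : i ≠ k) (hjk : j ≠ k) : ψ i (c k) = ψ j (c k) := by
    obtain ⟨⟨hck, -⟩, u, hu, huc⟩ := hcN k
    have hi := hψ i u (hXc i hu) (c k) ⟨hck, hc.ne hik.symm⟩ huc
    have hj := hψ j u (hXc j hu) (c k) ⟨hck, hc.ne hjk.symm⟩ huc
    rw [hi, hψφ i hu, ← hψφ j hu] at hj
    exact add_left_cancel hj
  choose p k hp using exists_forall_ne_eq hc hagree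
  refine mem_balancedOn_iff.2 ⟨p, fun u hu v hv huv ↦ ?_⟩
  have hthird : ∀ k l : Fin 3, ∃ i, i ≠ k ∧ i ≠ l := by decide
  obtain ⟨i, hiu, hiv⟩ := hthird (k u) (k v)
  rw [hψ i u ⟨hu, (hp u i hiu).1⟩ v ⟨hv, (hp v i hiv).1⟩ huv, (hp u i hiu).2, (hp v i hiv).2]

lemma mem_balancedOn_of_subsingleton_nbhdIn (h : (nbhdIn G U {x}).Subsingleton)
    (hx : ω ∈ balancedOn G (U \ {x})) : ω ∈ balancedOn G U := by
  classical
  obtain ⟨φ, hφ⟩ := mem_balancedOn_iff.1 hx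
  obtain ⟨q, hq⟩ : ∃ q, ∀ y ∈ U, G.Adj x y → ω s(x, y) = q + φ y := by
    by_cases hN : ∃ z ∈ U, G.Adj x z
    · obtain ⟨z, hz, hxz⟩ := hN
      refine ⟨ω s(x, z) + φ z, fun y hy hxy ↦ ?_⟩
      rw [h ⟨⟨hy, hxy.ne'⟩, x, rfl, hxy⟩ ⟨⟨hz, hxz.ne'⟩, x, rfl, hxz⟩]
      linear_combination -CharTwo.add_self_eq_zero (φ z)
    · exact ⟨0, fun y hy hxy ↦ (hN ⟨y, hy, hxy⟩).elim⟩
  refine mem_balancedOn_iff.2 ⟨Function.update φ x q, fun u hu v hv huv ↦ ?_⟩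
  by_cases hux : u = x
  · subst hux
    rw [Function.update_self, Function.update_of_ne huv.ne', hq v hv huv]
  by_cases hvx : v = x
  · subst hvx
    rw [Function.update_self, Function.update_of_ne huv.ne, Sym2.eq_swap, hq u hu huv.symm,
      add_comm]
  rw [Function.update_of_ne hux, Function.update_of_ne hvx, hφ u ⟨hu, hux⟩ v ⟨hv, hvx⟩ huv]

lemma mem_balancedOn_of_nbhdIn_eq_empty (h : nbhdIn G U Z = ∅)
    (hZ : ω ∈ balancedOn G Z) (hUZ : ω ∈ balancedOn G (U \ Z)) : ω ∈ balancedOn G U := by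
  classical
  rw [nbhdIn_eq_empty_iff] at h
  obtain ⟨φ, hφ⟩ := mem_balancedOn_iff.1 hZ
  obtain ⟨ψ, hψ⟩ := mem_balancedOn_iff.1 hUZ
  refine mem_balancedOn_iff.2 ⟨Z.piecewise φ ψ, fun u hu v hv huv ↦ ?_⟩
  by_cases huZ : u ∈ Z
  · have hvZ := h u huZ v hv huv
    simpa [huZ, hvZ] using hφ u huZ v hvZ huv
  · have hvZ : v ∉ Z := fun hvZ ↦ huZ (h v hvZ u hu huv.symm)
    simpa [huZ, hvZ] using hψ u ⟨hu, huZ⟩ v ⟨hv, hvZ⟩ huv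

lemma isInducedCycle_of_minimal_notMem_balancedOn [Finite V] (hU : ω ∉ balancedOn G U)
    (hmin : ∀ x ∈ U, ω ∈ balancedOn G (U \ {x})) : IsInducedCycle G U := by
  have hne : U.Nonempty := by
    by_contra h
    exact hU (mem_balancedOn_iff.2 ⟨0, fun x hx ↦ (h ⟨x, hx⟩).elim⟩)
  have hssub {Z : Set V} (hZ : Z ⊂ U) : ω ∈ balancedOn G Z := by
    obtain ⟨y, hyU, hyZ⟩ := Set.exists_of_ssubset hZ
    exact balancedOn_anti (Set.subset_sdiff_singleton hZ.1 hyZ) (hmin y hyU)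
  refine ⟨connected_induce_iff_nbhdIn.2 ⟨hne, fun Z hZU hZ hN ↦ ?_⟩, fun x hx ↦ ?_⟩
  · by_contra hZne
    exact hU <| mem_balancedOn_of_nbhdIn_eq_empty hN (hssub (hZU.ssubset_of_ne hZne))
      (hssub ⟨Set.sdiff_subset, fun h ↦ (h (hZU hZ.some_mem)).2 hZ.some_mem⟩)
  · rw [← nbhdIn_singleton]
    have hle : 1 < (nbhdIn G U {x}).ncard := by
      by_contra hle
      exact hU (mem_balancedOn_of_subsingleton_nbhdIn
        (Set.ncard_le_one_iff_subsingleton.1 (not_lt.1 hle)) (hmin x hx))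
    have hge : (nbhdIn G U {x}).ncard < 3 := by
      by_contra hge
      exact hU (mem_balancedOn_of_three_le_ncard_nbhdIn (connected_singleton x)
        (Set.singleton_subset_iff.2 hx) (not_lt.1 hge) fun y hy ↦ hmin y hy.1.1)
    omega

end Balance

section Connectivity

variable {G : SimpleGraph V} {X : Set V} {k : ℕ} {z : V}

lemma IsKConnected.finite (h : IsKConnected k G) : Finite V :=
  Set.finite_univ_iff.1 (Set.finite_of_ncard_pos (k.zero_le.trans_lt h.1))

lemma IsKConnected.mono {l : ℕ} (h : IsKConnected k G) (hlk : l ≤ k) : IsKConnected l G :=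
  ⟨hlk.trans_lt h.1, fun S hS hSl ↦ h.2 S hS (hSl.trans_le hlk)⟩

lemma IsKConnected.connected (h : IsKConnected (k + 1) G) : G.Connected := by
  have hconn := h.2 ∅ Set.finite_empty (by simp)
  rw [Set.compl_empty] at hconn
  exact (induceUnivIso G).connected_iff.1 hconn

lemma IsKConnected.le_ncard_nbhdIn (h : IsKConnected k G) (hX : X.Nonempty) (hzX : z ∉ X)
    (hzN : z ∉ nbhdIn G Set.univ X) : k ≤ (nbhdIn G Set.univ X).ncard := by
  have := h.finite
  by_contra hlt
  have hconn := h.2 _ (Set.toFinite _) (not_le.1 hlt)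
  have hX' : X = (nbhdIn G Set.univ X)ᶜ :=
    eq_of_nbhdIn_eq_empty hconn (fun x hx hN ↦ hN.1.2 hx) hX <|
      nbhdIn_eq_empty_iff.2 fun x hx y hy hxy ↦
        by_contra fun hyX ↦ hy ⟨⟨trivial, hyX⟩, x, hx, hxy⟩
  exact hzX (hX'.ge hzN)

lemma IsKConnected.le_ncard_neighborSet (h : IsKConnected k G) (v : V) :
    k ≤ (G.neighborSet v).ncard := by
  have := h.finite
  have hN : nbhdIn G Set.univ {v} = G.neighborSet v := by rw [nbhdIn_singleton, Set.inter_univ]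
  by_cases hz : ∃ z ∉ ({v} : Set V), z ∉ G.neighborSet v
  · obtain ⟨z, hzv, hzN⟩ := hz
    exact hN ▸ h.le_ncard_nbhdIn (Set.singleton_nonempty v) hzv (hN ▸ hzN)
  · push Not at hz
    have huniv : insert v (G.neighborSet v) = Set.univ :=
      Set.eq_univ_of_forall fun z ↦ (em (z = v)).imp_right (hz z)
    have hcard := Set.ncard_insert_le v (G.neighborSet v)
    have hk := h.1
    rw [huniv] at hcard
    omega

lemma IsKConnected.induce_compl_singleton (h : IsKConnected (k + 1) G) (v : V) :
    IsKConnected k (G.induce ({v}ᶜ : Set V)) := by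
  have := h.finite
  refine ⟨?_, fun S _ hSk ↦ ?_⟩
  · have hcard := Set.ncard_add_ncard_compl ({v} : Set V)
    have hk := h.1
    rw [Set.ncard_singleton] at hcard
    rw [Set.ncard_univ] at hk ⊢
    rw [Nat.card_coe_set_eq]
    omega
  · let T : Set V := insert v (Subtype.val '' S)
    have hT : T.ncard < k + 1 := by
      refine (Set.ncard_insert_le _ _).trans_lt ?_
      rwa [Set.ncard_image_of_injective S Subtype.val_injective, add_lt_add_iff_right]
    let e : (G.induce ({v}ᶜ : Set V)).induce Sᶜ ≃g G.induce Tᶜ :=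
      { toFun x := ⟨x.1.1, by grind⟩
        invFun x := ⟨⟨x.1, by grind⟩, by grind⟩
        left_inv _ := rfl
        right_inv _ := rfl
        map_rel_iff' := Iff.rfl }
    exact e.connected_iff.2 (h.2 T (Set.toFinite _) hT)

end Connectivity

section PeripheralCycleSpace

variable {G : SimpleGraph V} {B : Set V} {u : V} {ω : Sym2 V → ZMod 2}

lemma exists_connected_nbhdIn_subset (hu : u ∉ B) (huN : u ∉ nbhdIn G Set.univ B) :
    ∃ X ⊆ Bᶜ, u ∈ X ∧ (G.induce X).Connected ∧
      nbhdIn G Set.univ X ⊆ nbhdIn G Set.univ B := by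
  have huS : u ∈ Bᶜ \ nbhdIn G Set.univ B := ⟨hu, huN⟩
  obtain ⟨X, hXS, huX, hX, hXN⟩ := exists_component (G := G) huS
  refine ⟨X, fun x hx ↦ (hXS hx).1, huX, hX, fun y ⟨⟨_, hyX⟩, x, hx, hxy⟩ ↦ ?_⟩
  by_contra hyN
  have hyB : y ∉ B := fun hyB ↦ (hXS hx).2 ⟨⟨trivial, (hXS hx).1⟩, y, hyB, hxy.symm⟩
  exact hyX (nbhdIn_eq_empty_iff.1 hXN x hx y ⟨hyB, hyN⟩ hxy)

lemma exists_notMem_balancedOn_compl_singleton (h3 : IsKConnected 3 G)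
    (hω : ω ∉ balancedOn G Set.univ) : ∃ b, ω ∉ balancedOn G {b}ᶜ := by
  have := h3.finite
  by_contra! hb
  obtain ⟨x⟩ := (h3.mono (l := 1) (by omega)).connected.nonempty
  refine hω (mem_balancedOn_of_three_le_ncard_nbhdIn (connected_singleton x)
    (Set.subset_univ _) ?_ fun y _ ↦ Set.compl_eq_univ_sdiff {y} ▸ hb y)
  rw [nbhdIn_singleton, Set.inter_univ]
  exact h3.le_ncard_neighborSet x

-- A vertex of `Bᶜ` with no neighbour in `B` would lie in a connected `X ⊆ Bᶜ` whose at least three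
-- neighbours all have neighbours in `B`; by maximality `ω` is balanced after deleting any of them.
lemma isInducedCycle_compl_of_maximal (h3 : IsKConnected 3 G)
    (hB : Maximal (fun B ↦ (G.induce B).Connected ∧ ω ∉ balancedOn G Bᶜ) B) :
    IsInducedCycle G Bᶜ := by
  have := h3.finite
  obtain ⟨⟨hBconn, hBω⟩, hmax⟩ := hB
  have hremove (c) (hc : c ∈ nbhdIn G Set.univ B) : ω ∈ balancedOn G (Bᶜ \ {c}) := by
    obtain ⟨⟨-, hcB⟩, b, hb, hbc⟩ := hc
    by_contra hcω
    have hinsert : (G.induce (insert c B)).Connected := connected_insert hBconn ⟨b, hb, hbc.symm⟩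
    refine hcB (hmax ⟨hinsert, ?_⟩ (Set.subset_insert c B) (Set.mem_insert c B))
    rwa [Set.insert_eq, Set.compl_union, Set.inter_comm, ← Set.sdiff_eq]
  refine isInducedCycle_of_minimal_notMem_balancedOn hBω fun u hu ↦ hremove u ?_
  by_contra huN
  obtain ⟨X, hXB, huX, hX, hXN⟩ := exists_connected_nbhdIn_subset hu huN
  obtain ⟨b, hb⟩ := nonempty_of_connected hBconn
  have hNB : nbhdIn G Bᶜ X = nbhdIn G Set.univ X :=
    Set.Subset.antisymm (fun y ⟨⟨_, hyX⟩, hxy⟩ ↦ ⟨⟨trivial, hyX⟩, hxy⟩)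
      fun y hy ↦ ⟨⟨(hXN hy).1.2, hy.1.2⟩, hy.2⟩
  refine hBω (mem_balancedOn_of_three_le_ncard_nbhdIn hX hXB ?_ fun y hy ↦
    hremove y (hXN (hNB.le hy)))
  rw [hNB]
  exact h3.le_ncard_nbhdIn ⟨u, huX⟩ (fun hbX ↦ hXB hbX hb) fun hbN ↦ (hXN hbN).1.2 hb

lemma exists_isPeripheral_notMem_balancedOn (h3 : IsKConnected 3 G)
    (hω : ω ∉ balancedOn G Set.univ) : ∃ C, IsPeripheral G C ∧ ω ∉ balancedOn G C := by
  have := h3.finite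
  obtain ⟨b, hb⟩ := exists_notMem_balancedOn_compl_singleton h3 hω
  obtain ⟨B, hB⟩ := (Set.toFinite {B | (G.induce B).Connected ∧ ω ∉ balancedOn G Bᶜ}).exists_maximal
    ⟨{b}, connected_singleton b, hb⟩
  refine ⟨Bᶜ, ⟨isInducedCycle_compl_of_maximal h3 hB, ?_⟩, hB.prop.2⟩
  rw [compl_compl]
  exact hB.prop.1

lemma IsPeripheral.finrank_quotient_balancedOn [Finite V] {C : Set V} (hC : IsPeripheral G C) :
    Module.finrank (ZMod 2) ((Sym2 V → ZMod 2) ⧸ balancedOn G C) = 1 := by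
  have hcard := _root_.finrank_quotient_balancedOn hC.1.1
  rw [hC.1.ncard_edgeSet] at hcard
  omega

lemma finrank_quotient_balancedOn_univ_le (h3 : IsKConnected 3 G) :
    Module.finrank (ZMod 2) ((Sym2 V → ZMod 2) ⧸ balancedOn G Set.univ) ≤
      {C | IsPeripheral G C}.ncard := by
  have := h3.finite
  have := Fintype.ofFinite {C | IsPeripheral G C}
  have hle : ⨅ C : {C | IsPeripheral G C}, balancedOn G C.1 ≤ balancedOn G Set.univ := by
    intro ω hω
    by_contra hω'
    obtain ⟨C, hC, hCω⟩ := exists_isPeripheral_notMem_balancedOn h3 hω'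
    exact hCω ((Submodule.mem_iInf _).1 hω ⟨C, hC⟩)
  calc Module.finrank (ZMod 2) ((Sym2 V → ZMod 2) ⧸ balancedOn G Set.univ)
      ≤ Module.finrank (ZMod 2)
          ((Sym2 V → ZMod 2) ⧸ ⨅ C : {C | IsPeripheral G C}, balancedOn G C.1) :=
        LinearMap.finrank_le_finrank_of_surjective (Submodule.factor_surjective hle)
    _ ≤ ∑ C : {C | IsPeripheral G C},
          Module.finrank (ZMod 2) ((Sym2 V → ZMod 2) ⧸ balancedOn G C.1) :=
        finrank_quotient_iInf_le _
    _ = ∑ C : {C | IsPeripheral G C}, 1 :=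
        Finset.sum_congr rfl fun C _ ↦ IsPeripheral.finrank_quotient_balancedOn C.2
    _ = {C | IsPeripheral G C}.ncard := by
        rw [Finset.sum_const, smul_eq_mul, mul_one, Finset.card_univ, ← Nat.card_eq_fintype_card,
          Nat.card_coe_set_eq]

lemma ncard_edgeSet_lt_ncard_isPeripheral_add (h3 : IsKConnected 3 G) :
    G.edgeSet.ncard < {C | IsPeripheral G C}.ncard + (Set.univ : Set V).ncard := by
  have := h3.finite
  have hconn : (G.induce Set.univ).Connected :=
    (induceUnivIso G).connected_iff.2 (h3.mono (l := 1) (by omega)).connected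
  have hrank := finrank_quotient_balancedOn hconn
  have hle := finrank_quotient_balancedOn_univ_le h3
  have hedge : (G.induce Set.univ).edgeSet.ncard = G.edgeSet.ncard :=
    Nat.card_congr (induceUnivIso G).mapEdgeSet
  omega

end PeripheralCycleSpace

section Counting

variable {G : SimpleGraph V} {C : Set V} {x y : V}

lemma IsInducedCycle.two_lt_ncard [Finite V] (hC : IsInducedCycle G C) : 2 < C.ncard := by
  obtain ⟨x, hx⟩ := nonempty_of_connected hC.1
  rw [← hC.2 x hx]
  exact Set.ncard_lt_ncard ⟨Set.inter_subset_right, fun h ↦ G.irrefl (h hx).1⟩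

lemma IsInducedCycle.isClique_of_ncard_eq_three [Finite V] (hC : IsInducedCycle G C)
    (h3 : C.ncard = 3) : G.IsClique C := by
  intro x hx y hy hxy
  have hsub : G.neighborSet x ∩ C ⊆ C \ {x} := fun z ⟨hxz, hz⟩ ↦ ⟨hz, hxz.ne'⟩
  have heq : G.neighborSet x ∩ C = C \ {x} :=
    Set.eq_of_subset_of_ncard_le hsub (by rw [Set.ncard_sdiff_singleton_of_mem hx, hC.2 x hx, h3])
  exact (heq.ge ⟨hy, hxy.symm⟩).1

lemma IsPlanar.ncard_isPeripheral_mem_mem_le_two [Finite V] (hG : IsPlanar G)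
    (hdeg : ∀ u, 4 ≤ (G.neighborSet u).ncard) (hxy : G.Adj x y) :
    {C | IsPeripheral G C ∧ x ∈ C ∧ y ∈ C}.ncard ≤ 2 := by
  by_contra! h
  obtain ⟨C, hC, hCxy⟩ := exists_injective_of_le_ncard h
  exact (hasMinor_of_three_peripheral (fun i ↦ (hCxy i).1) hC hdeg (fun i ↦ (hCxy i).2.1)
    (fun i ↦ (hCxy i).2.2) hxy).elim hG.1 hG.2

variable [Fintype V] [DecidableRel G.Adj]

lemma ncard_neighborSet_eq_degree (u : V) : (G.neighborSet u).ncard = G.degree u := by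
  rw [Set.ncard_eq_toFinset_card', ← G.card_neighborFinset_eq_degree, neighborFinset_def]

lemma IsPlanar.ncard_isPeripheral_mem_le_degree (hG : IsPlanar G) (hdeg : ∀ u, 4 ≤ G.degree u)
    (x : V) : {C | IsPeripheral G C ∧ x ∈ C}.ncard ≤ G.degree x := by
  classical
  simp only [← ncard_neighborSet_eq_degree] at hdeg
  rw [Set.ncard_eq_toFinset_card _ (Set.toFinite _), ← G.card_neighborFinset_eq_degree]
  refine Nat.le_of_mul_le_mul_right (Finset.card_mul_le_card_mul (fun C y ↦ y ∈ C)
    (m := 2) (n := 2) (fun C hC ↦ ?_) fun y hy ↦ ?_) two_pos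
  · obtain ⟨hC, hx⟩ := (Set.Finite.mem_toFinset _).1 hC
    rw [← hC.1.2 x hx, ← Set.ncard_coe_finset]
    simp [Finset.bipartiteAbove, Set.inter_def]
  · refine le_trans (le_of_eq ?_) (hG.ncard_isPeripheral_mem_mem_le_two hdeg (x := x) (y := y) ?_)
    · rw [← Set.ncard_coe_finset]
      simp [Finset.bipartiteBelow, and_assoc]
    · simpa using hy

lemma IsPlanar.sum_ncard_isPeripheral_le (hG : IsPlanar G) (hdeg : ∀ u, 4 ≤ G.degree u) :
    ∑ C ∈ (Set.toFinite {C | IsPeripheral G C}).toFinset, C.ncard ≤ 2 * G.edgeFinset.card := by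
  classical
  calc ∑ C ∈ (Set.toFinite {C | IsPeripheral G C}).toFinset, C.ncard
      = ∑ x : V, {C | IsPeripheral G C ∧ x ∈ C}.ncard := by
        convert Finset.sum_card_bipartiteAbove_eq_sum_card_bipartiteBelow
          (t := Finset.univ) (fun (C : Set V) x ↦ x ∈ C) using 2 with C - x -
        · rw [← Set.ncard_coe_finset]
          simp [Finset.bipartiteAbove, Set.ofPred_mem_eq]
        · rw [← Set.ncard_coe_finset]
          simp [Finset.bipartiteBelow]
    _ ≤ ∑ x : V, G.degree x :=
        Finset.sum_le_sum fun x _ ↦ hG.ncard_isPeripheral_mem_le_degree hdeg x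
    _ = 2 * G.edgeFinset.card := G.sum_degrees_eq_twice_card_edges

variable [DecidableEq V]

lemma ncard_isPeripheral_eq_three_le_card_cliqueFinset :
    {C | IsPeripheral G C ∧ C.ncard = 3}.ncard ≤ (G.cliqueFinset 3).card := by
  rw [← Set.ncard_coe_finset]
  refine (Set.ncard_le_ncard (t := (↑) '' (G.cliqueFinset 3 : Set (Finset V))) ?_).trans
    (Set.ncard_image_le (Set.toFinite _))
  rintro C ⟨hC, h3⟩
  have hclique := hC.1.isClique_of_ncard_eq_three h3
  refine ⟨(Set.toFinite C).toFinset, ?_, (Set.toFinite C).coe_toFinset⟩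
  rw [Set.ncard_eq_toFinset_card _ (Set.toFinite C)] at h3
  rw [← (Set.toFinite C).coe_toFinset] at hclique
  exact mem_cliqueFinset_iff.2 ⟨hclique, h3⟩

lemma IsPlanar.four_mul_ncard_isPeripheral_le (hG : IsPlanar G) (hdeg : ∀ u, 4 ≤ G.degree u) :
    4 * {C | IsPeripheral G C}.ncard ≤ 2 * G.edgeFinset.card + (G.cliqueFinset 3).card := by
  classical
  let F := (Set.toFinite {C | IsPeripheral G C}).toFinset
  have hF : 4 * F.card ≤ ∑ C ∈ F, C.ncard + (F.filter fun C ↦ C.ncard = 3).card := by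
    rw [Finset.card_filter, ← Finset.sum_add_distrib, mul_comm, ← smul_eq_mul, ← Finset.sum_const]
    refine Finset.sum_le_sum fun C hC ↦ ?_
    have h2 := IsInducedCycle.two_lt_ncard ((Set.Finite.mem_toFinset _).1 hC).1
    split_ifs <;> omega
  have hsum : ∑ C ∈ F, C.ncard ≤ 2 * G.edgeFinset.card := hG.sum_ncard_isPeripheral_le hdeg
  have htri : (F.filter fun C ↦ C.ncard = 3).card ≤ (G.cliqueFinset 3).card := by
    refine le_trans (le_of_eq ?_) ncard_isPeripheral_eq_three_le_card_cliqueFinset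
    rw [← Set.ncard_coe_finset]
    simp [F]
  have hcard : {C | IsPeripheral G C}.ncard = F.card :=
    Set.ncard_eq_toFinset_card _ (Set.toFinite _)
  omega

lemma two_mul_card_cliqueFinset_three_mem_le_degree (hG : G.EdgeDisjointTriangles) (u : V) :
    2 * {s ∈ G.cliqueFinset 3 | u ∈ s}.card ≤ G.degree u := by
  rw [mul_comm, ← mul_one (G.degree u), ← G.card_neighborFinset_eq_degree]
  refine Finset.card_mul_le_card_mul (fun s y ↦ y ∈ s) (fun s hs ↦ ?_) fun y hy ↦ ?_
  · obtain ⟨hs, hu⟩ := Finset.mem_filter.1 hs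
    rw [mem_cliqueFinset_iff] at hs
    have hcard : (s.erase u).card = 2 := by rw [Finset.card_erase_of_mem hu, hs.card_eq]
    rw [← hcard]
    refine Finset.card_le_card fun y hy ↦ ?_
    obtain ⟨hyu, hys⟩ := Finset.mem_erase.1 hy
    exact Finset.mem_filter.2 ⟨(G.mem_neighborFinset u y).2 (hs.isClique hu hys hyu.symm), hys⟩
  · refine Finset.card_le_one.2 fun s hs t ht ↦ by_contra fun hst ↦ ?_
    simp only [Finset.bipartiteBelow, Finset.mem_filter, mem_cliqueFinset_iff] at hs ht
    exact ((G.mem_neighborFinset u y).1 hy).ne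
      (hG hs.1.1 ht.1.1 hst ⟨hs.1.2, ht.1.2⟩ ⟨hs.2, ht.2⟩)

lemma two_mul_card_cliqueFinset_three_le
    (h : ∀ s ∈ G.cliqueFinset 3, {u ∈ s | G.degree u ≤ 4}.card ≤ 1) :
    2 * (G.cliqueFinset 3).card ≤
      ∑ u with 4 < G.degree u, {s ∈ G.cliqueFinset 3 | u ∈ s}.card := by
  let D : Finset V := {u | 4 < G.degree u}
  have hlarge (s) (hs : s ∈ G.cliqueFinset 3) :
      2 ≤ (D.bipartiteAbove (fun s u ↦ u ∈ s) s).card := by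
    have hsplit := Finset.card_filter_add_card_filter_not (s := s) (fun u ↦ G.degree u ≤ 4)
    have hD : D.bipartiteAbove (fun s u ↦ u ∈ s) s = {u ∈ s | ¬ G.degree u ≤ 4} := by
      ext u
      simp [D, Finset.bipartiteAbove, and_comm]
    have hs' := h s hs
    rw [(mem_cliqueFinset_iff.1 hs).card_eq] at hsplit
    rw [hD]
    omega
  calc 2 * (G.cliqueFinset 3).card
      = ∑ _s ∈ G.cliqueFinset 3, 2 := by rw [Finset.sum_const, smul_eq_mul, mul_comm]
    _ ≤ ∑ s ∈ G.cliqueFinset 3, (D.bipartiteAbove (fun s u ↦ u ∈ s) s).card :=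
        Finset.sum_le_sum hlarge
    _ = ∑ u ∈ D, {s ∈ G.cliqueFinset 3 | u ∈ s}.card :=
        Finset.sum_card_bipartiteAbove_eq_sum_card_bipartiteBelow _

lemma card_cliqueFinset_three_add_le (hG : G.EdgeDisjointTriangles) (hdeg : ∀ u, 4 ≤ G.degree u)
    (h : ∀ s ∈ G.cliqueFinset 3, {u ∈ s | G.degree u ≤ 4}.card ≤ 1) :
    (G.cliqueFinset 3).card + 4 * Fintype.card V ≤ 2 * G.edgeFinset.card := by
  have hvertex (u : V) :
      (if 4 < G.degree u then {s ∈ G.cliqueFinset 3 | u ∈ s}.card else 0) + 8 ≤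
        2 * G.degree u := by
    have htri := two_mul_card_cliqueFinset_three_mem_le_degree hG u
    have hu := hdeg u
    split_ifs <;> omega
  have hsum : 2 * (G.cliqueFinset 3).card + 8 * Fintype.card V ≤ 2 * (2 * G.edgeFinset.card) :=
    calc 2 * (G.cliqueFinset 3).card + 8 * Fintype.card V
        ≤ ∑ u with 4 < G.degree u, {s ∈ G.cliqueFinset 3 | u ∈ s}.card + 8 * Fintype.card V :=
          Nat.add_le_add_right (two_mul_card_cliqueFinset_three_le h) _
      _ = ∑ u : V, ((if 4 < G.degree u then {s ∈ G.cliqueFinset 3 | u ∈ s}.card else 0) + 8) := by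
          rw [Finset.sum_filter, Finset.sum_add_distrib, Finset.sum_const, Finset.card_univ,
            smul_eq_mul, mul_comm 8]
      _ ≤ ∑ u : V, 2 * G.degree u := Finset.sum_le_sum fun u _ ↦ hvertex u
      _ = 2 * (2 * G.edgeFinset.card) := by
          rw [← Finset.mul_sum, G.sum_degrees_eq_twice_card_edges]
  omega

lemma IsPlanar.exists_mem_cliqueFinset_three (hG : IsPlanar G) (h3 : IsKConnected 3 G)
    (hdeg : ∀ u, 4 ≤ G.degree u) (htri : G.EdgeDisjointTriangles) :
    ∃ s ∈ G.cliqueFinset 3, 1 < {u ∈ s | G.degree u ≤ 4}.card := by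
  by_contra! h
  have heuler := ncard_edgeSet_lt_ncard_isPeripheral_add h3
  have hfaces := hG.four_mul_ncard_isPeripheral_le hdeg
  have hcount := card_cliqueFinset_three_add_le htri hdeg h
  rw [Set.ncard_univ, Nat.card_eq_fintype_card, ← coe_edgeFinset, Set.ncard_coe_finset] at heuler
  omega

end Counting

section Apex

variable {G : SimpleGraph V} {S : Set V} {a b v : V}

lemma containsK4minus.of_induce (h : containsK4minus (G.induce S)) : containsK4minus G := by
  obtain ⟨a, b, c, d, hab, hac, had, hbc, hbd, hcd, h⟩ := h
  exact ⟨a, b, c, d, Subtype.coe_ne_coe.2 hab, Subtype.coe_ne_coe.2 hac, Subtype.coe_ne_coe.2 had,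
    Subtype.coe_ne_coe.2 hbc, Subtype.coe_ne_coe.2 hbd, Subtype.coe_ne_coe.2 hcd, h⟩

lemma containsK4minus_of_adj_of_adj {s : Finset V} (hs : G.IsNClique 3 s) (ha : a ∈ s)
    (hb : b ∈ s) (hab : a ≠ b) (hv : v ∉ s) (hav : G.Adj a v) (hbv : G.Adj b v) :
    containsK4minus G := by
  classical
  obtain ⟨c, hc, hcab⟩ : ∃ c ∈ s, c ∉ ({a, b} : Finset V) :=
    Finset.exists_mem_notMem_of_card_lt_card (Finset.card_le_two.trans_lt (by simp [hs.card_eq]))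
  have hadj := hs.isClique ha hb hab
  have hac := hs.isClique ha hc (by grind)
  have hbc := hs.isClique hb hc (by grind)
  exact ⟨a, b, c, v, hab, hac.ne, hav.ne, hbc.ne, hbv.ne, ne_of_mem_of_not_mem hc hv,
    hadj, hac, hav, hbc, hbv⟩

lemma edgeDisjointTriangles_of_not_containsK4minus (h : ¬ containsK4minus G) :
    G.EdgeDisjointTriangles := by
  rintro s hs t ht hst x ⟨hxs, hxt⟩ y ⟨hys, hyt⟩
  by_contra hxy
  obtain ⟨d, hdt, hds⟩ : ∃ d ∈ t, d ∉ s := Finset.not_subset.1 fun hsub ↦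
    hst (Finset.eq_of_subset_of_card_le hsub (hs.card_eq.trans ht.card_eq.symm).le).symm
  exact h (containsK4minus_of_adj_of_adj hs hxs hys hxy hds
    (ht.isClique hxt hdt (ne_of_mem_of_not_mem hxs hds))
    (ht.isClique hyt hdt (ne_of_mem_of_not_mem hys hds)))

lemma IsKConnected.adj_of_ncard_neighborSet_induce_le {k : ℕ} (h : IsKConnected (k + 1) G)
    {u : ({v}ᶜ : Set V)} (hu : ((G.induce ({v}ᶜ : Set V)).neighborSet u).ncard ≤ k) :
    G.Adj u v := by
  by_contra huv
  have himage : Subtype.val '' (G.induce ({v}ᶜ : Set V)).neighborSet u = G.neighborSet u := by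
    ext w
    exact ⟨fun ⟨_, hw', hw⟩ ↦ hw ▸ hw', fun hw ↦ ⟨⟨w, fun hwv ↦ huv (hwv ▸ hw)⟩, hw, rfl⟩⟩
  have hdeg := h.le_ncard_neighborSet u
  rw [← himage, Set.ncard_image_of_injective _ Subtype.val_injective] at hdeg
  omega

end Apex

theorem stmt0_general {V : Type*} (G : SimpleGraph V) (h5 : IsKConnected 5 G)
    (happex : ∃ v : V, IsPlanar (G.induce ({v}ᶜ : Set V))) : containsK4minus G := by
  classical
  by_contra hK
  obtain ⟨v, hplanar⟩ := happex
  have := h5.finite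
  have := Fintype.ofFinite V
  have h4 : IsKConnected 4 (G.induce ({v}ᶜ : Set V)) := h5.induce_compl_singleton v
  have hdeg (u) : 4 ≤ (G.induce ({v}ᶜ : Set V)).degree u :=
    (h4.le_ncard_neighborSet u).trans_eq (ncard_neighborSet_eq_degree u)
  have htri : (G.induce ({v}ᶜ : Set V)).EdgeDisjointTriangles :=
    edgeDisjointTriangles_of_not_containsK4minus (mt containsK4minus.of_induce hK)
  obtain ⟨s, hs, hlow⟩ := hplanar.exists_mem_cliqueFinset_three (h4.mono (by omega)) hdeg htri
  obtain ⟨a, ha, b, hb, hab⟩ := Finset.one_lt_card.1 hlow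
  rw [Finset.mem_filter, ← ncard_neighborSet_eq_degree] at ha hb
  have hs' : G.IsNClique 3 (s.map (.subtype _)) :=
    (isNClique_induce_iff _ s 3).1 (mem_cliqueFinset_iff.1 hs)
  have hv : v ∉ s.map (.subtype _) := fun hv ↦ Finset.property_of_mem_map_subtype s hv rfl
  exact hK (containsK4minus_of_adj_of_adj hs' (Finset.mem_map_of_mem _ ha.1)
    (Finset.mem_map_of_mem _ hb.1) (Subtype.coe_ne_coe.2 hab) hv
    (h5.adj_of_ncard_neighborSet_induce_le ha.2) (h5.adj_of_ncard_neighborSet_induce_le hb.2))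

/-- Every 5-connected nonplanar apex graph contains a subdivision
of `K₅` or contains `K₄⁻` as a subgraph. -/
theorem stmt0 {V : Type*} [Fintype V] (G : SimpleGraph V)
    (h5 : IsKConnected 5 G) (hnp : ¬ IsPlanar G)
    (happex : ∃ v : V, IsPlanar (G.induce ({v}ᶜ : Set V))) :
    containsK5Subdivision G ∨ containsK4minus G :=
  Or.inr (stmt0_general G h5 happex)
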